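/- arXiv:2407.08671 — 4 statements merged into one kernel-verified Lean document; each statement's English description precedes it below -/
import Mathlib

section
/- For real numbers a, c with 0 < a < c, define the Kummer confluent hypergeometric function M(a, c, z) = ∑_{r ≥ 0} ((a)_r/(c)_r)·z^r/r!, where (x)_r = x(x+1)⋯(x+r−1) is the Pochhammer symbol. Then for every z ∈ ℝ and every N ∈ ℕ, |M(a, c, z) − ∑_{r=0}^{N} ((a)_r/(c)_r)·z^r/r!| ≤ (1/(N+1)!)·((a)_{N+1}/(c)_{N+1})·|z|^{N+1}·exp(max(z, 0)). -/
open Real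

/-!
The ratio `(a)_r / (c)_r` is the `r`-th moment of the beta distribution with parameters
`a` and `c - a` (`integral_pow_mul_betaPDFReal`). Hence, with `w` its density,
`∫ exp (z t) w(t) dt - ∑_{r < n} ((a)_r/(c)_r) z^r/r!` is the integral against `w` of the Taylor
remainder of `exp` at `z t`. By Lagrange's form this remainder is at most
`|z t|^n / n! * exp (max z 0)` for `0 ≤ t ≤ 1` (`abs_exp_sub_sum_le`), and integrating the factor
`t^n` gives `(a)_n/(c)_n` (`abs_integral_exp_sub_sum_le`). As `n → ∞` the bound tends to zero, so
the Kummer series sums to the integral, and the bound for `n = N + 1` is the claim.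
-/

open MeasureTheory ProbabilityTheory Filter Topology

/-- Taylor's estimate for `exp`, sharp enough on the negative axis: there the remainder is at most
the first omitted term in absolute value. -/
lemma abs_exp_sub_sum_le (x : ℝ) (n : ℕ) :
    |exp x - ∑ r ∈ Finset.range n, x ^ r / (Nat.factorial r)|
      ≤ |x| ^ n / (Nat.factorial n) * exp (max x 0) := by
  rcases n with _ | n
  · simp
  rcases eq_or_ne x 0 with rfl | hx
  · simp [Finset.sum_range_succ']
  obtain ⟨y, hy, h⟩ := taylor_mean_remainder_lagrange_iteratedDeriv (f := exp) (n := n) hx.symm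
    (contDiff_exp.contDiffOn)
  have hT : taylorWithinEval exp n (Set.uIcc 0 x) 0 x
      = ∑ r ∈ Finset.range (n + 1), x ^ r / (Nat.factorial r) := by
    rw [taylor_within_apply]
    refine Finset.sum_congr rfl fun r _ => ?_
    rw [iteratedDerivWithin_eq_iteratedDeriv (uniqueDiffOn_uIcc hx.symm)
      contDiff_exp.contDiffAt Set.left_mem_uIcc]
    simp [iteratedDeriv_eq_iterate]
    ring
  rw [hT] at h
  rw [h, abs_div, abs_mul]
  have hy' : y ≤ max x 0 := by
    have := hy.2
    rw [max_comm]
    exact this.le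
  simp only [iteratedDeriv_eq_iterate, iter_deriv_exp, abs_exp, sub_zero, abs_pow, Nat.abs_cast]
  rw [mul_comm, mul_div_right_comm]
  gcongr

lemma betaPDFReal_nonneg {α β : ℝ} (hα : 0 < α) (hβ : 0 < β) (t : ℝ) :
    0 ≤ betaPDFReal α β t := by
  by_cases h : 0 < t ∧ t < 1
  · exact (betaPDFReal_pos h.1 h.2 hα hβ).le
  · simp [betaPDFReal, h]

lemma integrable_betaPDFReal {α β : ℝ} (hα : 0 < α) (hβ : 0 < β) :
    Integrable (betaPDFReal α β) := by
  refine ⟨(measurable_betaPDFReal α β).aestronglyMeasurable, ?_⟩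
  rw [hasFiniteIntegral_iff_ofReal (Eventually.of_forall (betaPDFReal_nonneg hα hβ))]
  have := lintegral_betaPDF_eq_one hα hβ
  simp only [betaPDF] at this
  simp [this]

lemma integral_betaPDFReal {α β : ℝ} (hα : 0 < α) (hβ : 0 < β) :
    ∫ t, betaPDFReal α β t = 1 := by
  rw [integral_eq_lintegral_of_nonneg_ae (Eventually.of_forall (betaPDFReal_nonneg hα hβ))
    (measurable_betaPDFReal α β).aestronglyMeasurable]
  have := lintegral_betaPDF_eq_one hα hβ
  simp only [betaPDF] at this
  simp [this]

lemma beta_add_nat {α β : ℝ} (hα : 0 < α) (hβ : 0 < β) (r : ℕ) :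
    beta (α + r) β = (ascPochhammer ℝ r).eval α / (ascPochhammer ℝ r).eval (α + β)
      * beta α β := by
  induction r with
  | zero => simp
  | succ r ih =>
    have h1 : 0 < α + r := by positivity
    have h2 : 0 < α + r + β := by positivity
    have h3 : 0 < α + β + r := by positivity
    have hP := ascPochhammer_pos r (α + β) (by positivity)
    have hstep : beta (α + (r + 1 : ℕ)) β = (α + r) / (α + β + r) * beta (α + r) β := by
      have hG := Gamma_pos_of_pos h2
      simp only [beta]
      rw [show α + ((r + 1 : ℕ) : ℝ) + β = (α + r + β) + 1 by push_cast; ring,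
        show α + ((r + 1 : ℕ) : ℝ) = (α + r) + 1 by push_cast; ring,
        Gamma_add_one h1.ne', Gamma_add_one h2.ne',
        show α + β + (r : ℝ) = α + r + β by ring]
      field_simp
    rw [hstep, ih, ascPochhammer_succ_eval, ascPochhammer_succ_eval]
    field_simp

/-- Multiplying a beta density by `t ^ r` gives, up to a constant, another beta density. -/
lemma pow_mul_betaPDFReal {α β : ℝ} (hα : 0 < α) (hβ : 0 < β) (r : ℕ) (t : ℝ) :
    t ^ r * betaPDFReal α β t =
      (ascPochhammer ℝ r).eval α / (ascPochhammer ℝ r).eval (α + β)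
        * betaPDFReal (α + r) β t := by
  by_cases h : 0 < t ∧ t < 1
  · have hP := ascPochhammer_pos r α hα
    have hQ := ascPochhammer_pos r (α + β) (by positivity)
    have hB := beta_pos hα hβ
    simp only [betaPDFReal, if_pos h]
    rw [beta_add_nat hα hβ r, show α + (r : ℝ) - 1 = (α - 1) + r by ring,
      rpow_add_natCast h.1.ne']
    field_simp
  · simp [betaPDFReal, h]

lemma integrable_pow_mul_betaPDFReal {α β : ℝ} (hα : 0 < α) (hβ : 0 < β) (r : ℕ) :
    Integrable (fun t => t ^ r * betaPDFReal α β t) := by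
  simp only [pow_mul_betaPDFReal hα hβ r]
  exact (integrable_betaPDFReal (by positivity) hβ).const_mul _

lemma integral_pow_mul_betaPDFReal {α β : ℝ} (hα : 0 < α) (hβ : 0 < β) (r : ℕ) :
    ∫ t, t ^ r * betaPDFReal α β t =
      (ascPochhammer ℝ r).eval α / (ascPochhammer ℝ r).eval (α + β) := by
  simp only [pow_mul_betaPDFReal hα hβ r]
  rw [integral_const_mul, integral_betaPDFReal (by positivity) hβ, mul_one]

lemma integrable_exp_mul_betaPDFReal {α β : ℝ} (hα : 0 < α) (hβ : 0 < β) (z : ℝ) :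
    Integrable (fun t => exp (z * t) * betaPDFReal α β t) := by
  refine ((integrable_betaPDFReal hα hβ).const_mul (exp |z|)).mono'
    (Measurable.aestronglyMeasurable (by fun_prop)) (Eventually.of_forall fun t => ?_)
  by_cases h : 0 < t ∧ t < 1
  · have hw := betaPDFReal_nonneg hα hβ t
    rw [norm_mul, norm_of_nonneg hw, norm_of_nonneg (exp_pos _).le]
    have : z * t ≤ |z| := by nlinarith [le_abs_self z, abs_nonneg z]
    gcongr
  · simp [betaPDFReal, h]

lemma abs_integral_exp_sub_sum_le {α β : ℝ} (hα : 0 < α) (hβ : 0 < β) (z : ℝ) (n : ℕ) :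
    |(∫ t, exp (z * t) * betaPDFReal α β t) - ∑ r ∈ Finset.range n,
        ((ascPochhammer ℝ r).eval α / (ascPochhammer ℝ r).eval (α + β))
          * z ^ r / (Nat.factorial r)|
      ≤ (1 / (Nat.factorial n))
          * ((ascPochhammer ℝ n).eval α / (ascPochhammer ℝ n).eval (α + β))
          * |z| ^ n * exp (max z 0) := by
  have hterm : ∀ r : ℕ, Integrable
      (fun t => z ^ r / (Nat.factorial r) * (t ^ r * betaPDFReal α β t)) := fun r =>
    (integrable_pow_mul_betaPDFReal hα hβ r).const_mul _
  have hsum : ∑ r ∈ Finset.range n,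
        ((ascPochhammer ℝ r).eval α / (ascPochhammer ℝ r).eval (α + β))
          * z ^ r / (Nat.factorial r)
      = ∫ t, ∑ r ∈ Finset.range n,
          z ^ r / (Nat.factorial r) * (t ^ r * betaPDFReal α β t) := by
    rw [integral_finsetSum _ fun r _ => hterm r]
    refine Finset.sum_congr rfl fun r _ => ?_
    rw [integral_const_mul, integral_pow_mul_betaPDFReal hα hβ]
    ring
  rw [hsum, ← integral_sub (integrable_exp_mul_betaPDFReal hα hβ z)
    (integrable_finsetSum _ fun r _ => hterm r), ← integral_pow_mul_betaPDFReal hα hβ n,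
    show ∀ I : ℝ, 1 / (Nat.factorial n : ℝ) * I * |z| ^ n * exp (max z 0)
      = (1 / (Nat.factorial n : ℝ) * |z| ^ n * exp (max z 0)) * I from fun I => by ring,
    ← integral_const_mul, ← norm_eq_abs]
  refine norm_integral_le_of_norm_le
    ((integrable_pow_mul_betaPDFReal hα hβ n).const_mul _) (Eventually.of_forall fun t => ?_)
  by_cases h : 0 < t ∧ t < 1
  · have hw := betaPDFReal_nonneg hα hβ t
    have hfac : exp (z * t) * betaPDFReal α β t - ∑ r ∈ Finset.range n,
          z ^ r / (Nat.factorial r) * (t ^ r * betaPDFReal α β t)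
        = (exp (z * t) - ∑ r ∈ Finset.range n, (z * t) ^ r / (Nat.factorial r))
          * betaPDFReal α β t := by
      rw [sub_mul, Finset.sum_mul]
      congr 1
      refine Finset.sum_congr rfl fun r _ => ?_
      rw [mul_pow]
      ring
    have hmax : max (z * t) 0 ≤ max z 0 := by
      refine max_le ?_ (le_max_right _ _)
      nlinarith [le_max_left z 0, le_max_right z 0]
    rw [hfac, norm_mul, norm_of_nonneg hw, norm_eq_abs]
    calc _ ≤ (|z * t| ^ n / (Nat.factorial n) * exp (max (z * t) 0)) * betaPDFReal α β t := by
            gcongr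
            exact abs_exp_sub_sum_le _ _
      _ ≤ (|z * t| ^ n / (Nat.factorial n) * exp (max z 0)) * betaPDFReal α β t := by
            gcongr
      _ = _ := by
            rw [abs_mul, abs_of_pos h.1, mul_pow]
            ring
  · simp [betaPDFReal, h]

lemma ascPochhammer_div_le_one {a c : ℝ} (ha : 0 < a) (hac : a < c) (r : ℕ) :
    (ascPochhammer ℝ r).eval a / (ascPochhammer ℝ r).eval c ≤ 1 := by
  rw [div_le_one (ascPochhammer_pos r c (ha.trans hac))]
  induction r with
  | zero => simp
  | succ r ih =>
    have hP := ascPochhammer_pos r c (ha.trans hac)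
    rw [ascPochhammer_succ_eval, ascPochhammer_succ_eval]
    gcongr

/-- Taylor remainder estimate for the Kummer confluent hypergeometric function
`M(a,c,z) = ∑_{r ≥ 0} ((a)_r/(c)_r) z^r/r!` with `0 < a < c`: for every real `z` and
`N ∈ ℕ`,
`|M(a,c,z) - ∑_{r=0}^{N} ((a)_r/(c)_r) z^r/r!|
  ≤ (1/(N+1)!) ((a)_{N+1}/(c)_{N+1}) |z|^{N+1} exp (max z 0)`,
where `(x)_r` is the (ascending) Pochhammer symbol. -/
theorem stmt_16 (a c : ℝ) (ha : 0 < a) (hac : a < c) (z : ℝ) (N : ℕ) :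
    |(∑' r : ℕ, ((ascPochhammer ℝ r).eval a / (ascPochhammer ℝ r).eval c)
          * z^r / (Nat.factorial r))
      - ∑ r ∈ Finset.range (N+1),
          ((ascPochhammer ℝ r).eval a / (ascPochhammer ℝ r).eval c)
            * z^r / (Nat.factorial r)|
      ≤ (1 / (Nat.factorial (N+1)))
          * ((ascPochhammer ℝ (N+1)).eval a / (ascPochhammer ℝ (N+1)).eval c)
          * |z|^(N+1) * Real.exp (max z 0) := by
  have hb : 0 < c - a := sub_pos.2 hac
  have key := abs_integral_exp_sub_sum_le ha hb z
  rw [add_sub_cancel] at key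
  have hpos : ∀ r : ℕ, 0 ≤ (ascPochhammer ℝ r).eval a / (ascPochhammer ℝ r).eval c := fun r =>
    (div_pos (ascPochhammer_pos r a ha) (ascPochhammer_pos r c (ha.trans hac))).le
  have hsummable : Summable fun r : ℕ =>
      ((ascPochhammer ℝ r).eval a / (ascPochhammer ℝ r).eval c) * z ^ r / (Nat.factorial r) := by
    refine (summable_pow_div_factorial |z|).of_norm_bounded fun r => ?_
    rw [norm_div, norm_mul, norm_pow, norm_of_nonneg (hpos r), norm_eq_abs, norm_natCast]
    gcongr
    exact mul_le_of_le_one_left (by positivity) (ascPochhammer_div_le_one ha hac r)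
  -- The remainder after `n` terms is at most `exp (max z 0)` times a term of the series of `exp |z|`.
  have hlim : Tendsto (fun n : ℕ => ∑ r ∈ Finset.range n,
      ((ascPochhammer ℝ r).eval a / (ascPochhammer ℝ r).eval c) * z ^ r / (Nat.factorial r))
      atTop (𝓝 (∫ t, exp (z * t) * betaPDFReal a (c - a) t)) := by
    rw [tendsto_iff_dist_tendsto_zero]
    refine squeeze_zero (fun _ => dist_nonneg) (fun n => ?_)
      (by simpa using
        (FloorSemiring.tendsto_pow_div_factorial_atTop |z|).mul_const (exp (max z 0)))
    rw [dist_comm, dist_eq]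
    refine (key n).trans ?_
    rw [mul_right_comm (1 / (Nat.factorial n : ℝ)), one_div_mul_eq_div]
    refine mul_le_mul_of_nonneg_right ?_ (exp_pos _).le
    exact mul_le_of_le_one_right (by positivity) (ascPochhammer_div_le_one ha hac n)
  rw [tendsto_nhds_unique hsummable.hasSum.tendsto_sum_nat hlim]
  exact key (N + 1)
end

section
/- For every b ∈ ℝ, ∑_{r ≥ 0} ((1/2)_r/(r!)²)·b^r = exp(b/2)·∑_{k ≥ 0} b^{2k}/(16^k·(k!)²), i.e. M(1/2, 1, b) = exp(b/2)·I₀(b/2), where I₀(z) = ∑_{k ≥ 0} z^{2k}/(2^{2k}(k!)²) is the modified Bessel function of the first kind of order 0. Moreover, the function λ₀(b) = b·I₀′(b/2)/I₀(b/2) satisfies λ₀(b) = b²/4 + O(b⁴) as b → 0. -/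
open Real Filter Asymptotics Topology

/-!
Write `c j` for the coefficient of `X ^ j` in `(X² + 1) ^ j`, which is `C(2k, k)` for `j = 2k` and
`0` for odd `j`. The Bessel series of `I₀(b/2)` is then `∑ c j (b/4)^j / j!`, and
`(1/2)_r / (r!)² = C(2r, r) / (4^r r!)`. The Cauchy product with `exp (b/2)` therefore reduces the
Kummer identity to `∑_{i+j=n} C(n, i) 2^i c j = C(2n, n)`, which is the comparison of the
coefficients of `X ^ n` in `(2X + (X² + 1)) ^ n = (1 + X) ^ (2n)`.

For the asymptotics, `I₀(z) = F(z²)` with `F(w) = ∑ w^k / (4^k (k!)²)` analytic at `0`, so that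
`λ₀(b) = b² (F'/F)(b²/4)`. As `F'/F` is differentiable at `0` with value `1/4` there,
`(F'/F)(w) - 1/4 = O(w)`, and the claim follows.
-/

/-! ### The Kummer identity -/

/-- The coefficient of `X ^ j` in `(X² + 1) ^ j`, i.e. the constant term of `(x + x⁻¹) ^ j`. -/
noncomputable def midCoeff (j : ℕ) : ℕ :=
  (((Polynomial.X : Polynomial ℕ) ^ 2 + 1) ^ j).coeff j

lemma midCoeff_eq (j : ℕ) : midCoeff j = if 2 ∣ j then j.choose (j / 2) else 0 := by
  have h : ((Polynomial.X : Polynomial ℕ) ^ 2 + 1) ^ j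
      = Polynomial.expand ℕ 2 ((Polynomial.X + 1) ^ j) := by simp
  rw [midCoeff, h, Polynomial.coeff_expand two_pos, Polynomial.coeff_X_add_one_pow]
  simp

/-- The coefficient of `X ^ n` in `(2X + (X² + 1)) ^ n = (X + 1) ^ (2n)`. -/
lemma sum_midCoeff (n : ℕ) :
    ∑ p ∈ Finset.HasAntidiagonal.antidiagonal n, n.choose p.1 * 2 ^ p.1 * midCoeff p.2 = n.centralBinom := by
  have h : ((Polynomial.X : Polynomial ℕ) + 1) ^ (2 * n)
      = (2 * Polynomial.X + (Polynomial.X ^ 2 + 1)) ^ n := by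
    rw [pow_mul]; congr 1; ring
  have h2 := congrArg (fun p => Polynomial.coeff p n) h
  simp only [Polynomial.coeff_X_add_one_pow] at h2
  rw [Nat.centralBinom, ← Nat.cast_id ((2 * n).choose n), h2, (Commute.all _ _).add_pow',
    Polynomial.finsetSum_coeff]
  refine Finset.sum_congr rfl fun p hp => ?_
  rw [Finset.HasAntidiagonal.mem_antidiagonal] at hp
  have h3 : n.choose p.1 • ((2 * Polynomial.X) ^ p.1 * ((Polynomial.X : Polynomial ℕ) ^ 2 + 1) ^ p.2)
      = Polynomial.C (n.choose p.1 * 2 ^ p.1) * (((Polynomial.X : Polynomial ℕ) ^ 2 + 1) ^ p.2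
        * Polynomial.X ^ p.1) := by
    simp only [nsmul_eq_mul, Polynomial.C_mul, Polynomial.C_pow, mul_pow]
    simp
    ring
  rw [h3, Polynomial.coeff_C_mul, midCoeff]
  congr 1
  conv_rhs => rw [← hp, add_comm p.1 p.2, Polynomial.coeff_mul_X_pow]

lemma ascPochhammer_half (r : ℕ) :
    (ascPochhammer ℝ r).eval (1/2) * 4 ^ r = r.centralBinom * r.factorial := by
  induction r with
  | zero => simp
  | succ r ih =>
    have h : ((r : ℝ) + 1) * (r + 1).centralBinom = 2 * (2 * r + 1) * r.centralBinom := by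
      exact_mod_cast Nat.succ_mul_centralBinom_succ r
    rw [ascPochhammer_succ_eval, pow_succ, Nat.factorial_succ]
    push_cast
    linear_combination (4 * (1 / 2 + (r : ℝ))) * ih - (r.factorial : ℝ) * h

lemma midCoeff_term_two_mul (b : ℝ) (k : ℕ) :
    midCoeff (2 * k) * (b / 4) ^ (2 * k) / (2 * k).factorial
      = b ^ (2 * k) / (16 ^ k * (k.factorial : ℝ) ^ 2) := by
  rw [midCoeff_eq, if_pos (dvd_mul_right 2 k), Nat.mul_div_cancel_left _ two_pos,
    Nat.cast_choose ℝ (by omega : k ≤ 2 * k), show 2 * k - k = k by omega, div_pow,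
    pow_mul (4 : ℝ)]
  have := Nat.factorial_ne_zero k
  have := Nat.factorial_ne_zero (2 * k)
  norm_num
  field_simp

lemma midCoeff_le (j : ℕ) : midCoeff j ≤ 2 ^ j := by
  rw [midCoeff_eq]
  split_ifs
  · exact Nat.choose_le_two_pow _ _
  · positivity

lemma summable_norm_midCoeff (b : ℝ) :
    Summable fun j : ℕ => ‖(midCoeff j * (b / 4) ^ j / j.factorial : ℝ)‖ := by
  refine Summable.of_nonneg_of_le (fun _ => norm_nonneg _) (fun j => ?_)
    (Real.summable_pow_div_factorial (2 * |b / 4|))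
  have h : (midCoeff j : ℝ) ≤ 2 ^ j := by exact_mod_cast midCoeff_le j
  rw [norm_div, norm_mul, norm_pow, RCLike.norm_natCast, RCLike.norm_natCast, mul_pow,
    Real.norm_eq_abs]
  gcongr

lemma tsum_midCoeff (b : ℝ) :
    ∑' j : ℕ, (midCoeff j * (b / 4) ^ j / j.factorial : ℝ)
      = ∑' k : ℕ, b ^ (2 * k) / (16 ^ k * (k.factorial : ℝ) ^ 2) := by
  have hinj : Function.Injective fun k : ℕ => 2 * k := fun a c h => by simpa using h
  rw [← hinj.tsum_eq]
  · exact tsum_congr fun k => midCoeff_term_two_mul b k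
  · intro j hj
    by_contra hn
    apply hj
    have : ¬ 2 ∣ j := fun ⟨k, hk⟩ => hn ⟨k, hk.symm⟩
    simp [midCoeff_eq, this]

lemma kummer_identity (b : ℝ) :
    (∑' r : ℕ, ((ascPochhammer ℝ r).eval (1/2) / ((Nat.factorial r))^2) * b^r)
      = Real.exp (b/2) * ∑' k : ℕ, b^(2*k) / (16^k * (Nat.factorial k)^2) := by
  rw [← tsum_midCoeff, Real.exp_eq_exp_ℝ, NormedSpace.exp_eq_tsum_div]
  beta_reduce
  rw [tsum_mul_tsum_eq_tsum_sum_antidiagonal_of_summable_norm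
      (NormedSpace.norm_expSeries_div_summable (b / 2)) (summable_norm_midCoeff b)]
  refine tsum_congr fun n => ?_
  have hn : (n.factorial : ℝ) ≠ 0 := by exact_mod_cast n.factorial_ne_zero
  have hl : (ascPochhammer ℝ n).eval (1/2) / (n.factorial : ℝ) ^ 2 * b ^ n
      = (b / 4) ^ n / n.factorial * n.centralBinom := by
    have := ascPochhammer_half n
    rw [div_pow]
    field_simp
    linear_combination b ^ n * this
  rw [hl, ← sum_midCoeff, Nat.cast_sum, Finset.mul_sum]
  refine Finset.sum_congr rfl fun p hp => ?_
  rw [Finset.HasAntidiagonal.mem_antidiagonal] at hp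
  obtain ⟨i, j⟩ := p
  dsimp only at hp ⊢
  subst hp
  have hi : (i.factorial : ℝ) ≠ 0 := by exact_mod_cast i.factorial_ne_zero
  have hj : (j.factorial : ℝ) ≠ 0 := by exact_mod_cast j.factorial_ne_zero
  rw [show b / 2 = 2 * (b / 4) by ring, mul_pow, pow_add]
  push_cast
  rw [Nat.cast_add_choose]
  field_simp

/-! ### Asymptotics of the eigenvalue -/

/-- The entire function `F` with `I₀(z) = F(z²)`. -/
noncomputable def besselAux (w : ℝ) : ℝ := ∑' k : ℕ, w ^ k / (4 ^ k * (k.factorial : ℝ) ^ 2)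

lemma besselAux_hasFPowerSeriesAt :
    HasFPowerSeriesAt besselAux
      (FormalMultilinearSeries.ofScalars ℝ fun k : ℕ => (1 / (4 ^ k * (k.factorial : ℝ) ^ 2) : ℝ))
      0 := by
  rw [hasFPowerSeriesAt_iff]
  refine Eventually.of_forall fun w => ?_
  have hs : Summable fun k : ℕ => w ^ k / (4 ^ k * (k.factorial : ℝ) ^ 2) := by
    refine Summable.of_norm_bounded (Real.summable_pow_div_factorial |w|) fun k => ?_
    rw [norm_div, norm_pow, Real.norm_eq_abs, Real.norm_of_nonneg (by positivity)]
    gcongr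
    have h1 : (1 : ℝ) ≤ k.factorial := by exact_mod_cast k.factorial_pos
    have h4 : (1 : ℝ) ≤ 4 ^ k := one_le_pow₀ (by norm_num)
    nlinarith
  rw [zero_add]
  refine hs.hasSum.congr_fun fun k => ?_
  rw [FormalMultilinearSeries.coeff_ofScalars, smul_eq_mul, mul_one_div]

/-- `M(1/2, 1, b) = e^{b/2} I₀(b/2)`, where `I₀` is the modified Bessel function of
the first kind of order `0`, and the lowest magnetic Steklov eigenvalue
`λ₀(b) = b I₀'(b/2)/I₀(b/2)` of the disk satisfies `λ₀(b) = b²/4 + O(b⁴)` as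
`b → 0`. -/
theorem stmt_17 (I₀ : ℝ → ℝ)
    (hI₀ : ∀ z : ℝ, I₀ z = ∑' k : ℕ, z^(2*k) / (2^(2*k) * (Nat.factorial k)^2)) :
    (∀ b : ℝ,
      (∑' r : ℕ, ((ascPochhammer ℝ r).eval (1/2) / ((Nat.factorial r))^2) * b^r)
        = Real.exp (b/2) * ∑' k : ℕ, b^(2*k) / (16^k * (Nat.factorial k)^2)) ∧
    (fun b : ℝ => b * deriv I₀ (b/2) / I₀ (b/2) - b^2/4)
      =O[𝓝 (0:ℝ)] fun b : ℝ => b^4 := by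
  refine ⟨kummer_identity, ?_⟩
  have hI : I₀ = fun z => besselAux (z ^ 2) := by
    funext z
    rw [hI₀, besselAux]
    refine tsum_congr fun k => ?_
    rw [pow_mul, pow_mul]
    norm_num
  have hF := besselAux_hasFPowerSeriesAt
  have hA : AnalyticAt ℝ besselAux 0 := hF.analyticAt
  have h0 : besselAux 0 = 1 := by
    rw [← hF.coeff_zero (fun _ => 0)]
    simp [FormalMultilinearSeries.ofScalars]
  have h1 : deriv besselAux 0 = 1 / 4 := by
    rw [hF.deriv]
    simp [FormalMultilinearSeries.ofScalars]
  have hG : (fun w => deriv besselAux w / besselAux w - 1 / 4) =O[𝓝 0] fun w : ℝ => w := by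
    have hd : DifferentiableAt ℝ (fun w => deriv besselAux w / besselAux w) 0 :=
      hA.deriv.differentiableAt.div hA.differentiableAt (by simp [h0])
    simpa [h0, h1] using hd.isBigO_sub
  have ht : Tendsto (fun b : ℝ => (b / 2) ^ 2) (𝓝 0) (𝓝 0) :=
    Continuous.tendsto' (by fun_prop) _ _ (by norm_num)
  have hO := (isBigO_refl (fun b : ℝ => b ^ 2) (𝓝 0)).mul (hG.comp_tendsto ht)
  have hev := ht.eventually hA.eventually_analyticAt
  have hO' : (fun b : ℝ => b ^ 2 * ((fun w : ℝ => w) ∘ fun b : ℝ => (b / 2) ^ 2) b)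
      =O[𝓝 (0 : ℝ)] fun b : ℝ => b ^ 4 := by
    refine (isBigO_const_mul_self (1 / 4 : ℝ) (fun b : ℝ => b ^ 4) _).congr_left fun b => ?_
    simp only [Function.comp]
    ring
  refine (hO.trans hO').congr' ?_ EventuallyEq.rfl
  filter_upwards [hev] with b hb
  have hd : deriv I₀ (b / 2) = deriv besselAux ((b / 2) ^ 2) * b := by
    have h := hb.differentiableAt.hasDerivAt.comp_of_eq (b / 2) (hasDerivAt_pow 2 (b / 2)) rfl
    rw [hI]
    refine h.deriv.trans ?_
    push_cast
    ring
  rw [hd, hI]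
  simp only [Function.comp]
  ring
end

section
/- For n ≥ 1 and b ∈ ℝ define λ_n(b) = n − b + 2b·((1/2)/(n+1))·M(3/2, n+2, b)/M(1/2, n+1, b) and μ_n(b) = n − b + 2b·(1/(2n) + (b − 1)/(2n²) + (2b² − 7b + 2)/(4n³)), where M(a, c, z) = ∑_{r ≥ 0} ((a)_r/(c)_r)·z^r/r! is the Kummer confluent hypergeometric function. Then for every L > 0 there exists C > 0 such that for all integers n ≥ 1 and all b ∈ [−L, L], |λ_n(b) − μ_n(b)| ≤ C·|b|/n⁴. -/
/-!
Put `c = n + 1`, so that `λ_n(b) - μ_n(b) = 2b (N / M(1/2, c, b))` with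
`N = M(3/2, c + 1, b) / (2c) - M(1/2, c, b) T` and
`T = 1/(2n) + (b - 1)/(2n²) + (2b² - 7b + 2)/(4n³)`. Two uniform estimates suffice.

*Upper bound for `N`.* For `0 < a ≤ c` the ratio `(a)_r / (c)_r` is antitone in `r`, so cutting the
series of `M(a, c, z)` after `k` terms costs at most `(a)_k / (c)_k * e^{|z|}`
(`abs_kummer_sub_sum_le`). With `k = 3` both errors are `O(n⁻³)`, and they enter `N` with factors
`1/(2c)` and `T` of size `O(n⁻¹)`. The quadratic truncations contribute a rational function of `n`
whose numerator has degree `2` over a denominator of degree `6` (`truncation_identity`).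

*Lower bound for the denominator.* `M(a, c, b) ≥ e^{-|b|}` for `0 < a ≤ c`. For `b ≥ 0` all terms of
the series are nonnegative. For `b = -z < 0`, the Cauchy product `e^z M(a, c, -z)` has coefficients
`S_m z^m / m!`, where `S_m = ∑_j (-1)^j C(m, j) (a)_j / (c)_j` is an iterated difference that is
nonnegative because `(a)_j / (c)_j` is completely monotone in `j` (`alternating_sum_nonneg`); hence
`e^z M(a, c, -z) ≥ S_0 = 1`.
-/

open Real

/-- The ratio of Pochhammer symbols `(a)_r / (c)_r`. -/
noncomputable def pochRatio (a c : ℝ) (r : ℕ) : ℝ :=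
  (ascPochhammer ℝ r).eval a / (ascPochhammer ℝ r).eval c

/-- The Kummer function `M(a, c, z)`, as the sum of its series. -/
noncomputable def kummer (a c z : ℝ) : ℝ :=
  ∑' r : ℕ, pochRatio a c r * z ^ r / (Nat.factorial r)

lemma pochRatio_zero (a c : ℝ) : pochRatio a c 0 = 1 := by simp [pochRatio]

lemma pochRatio_succ (a c : ℝ) (r : ℕ) :
    pochRatio a c (r + 1) = pochRatio a c r * ((a + r) / (c + r)) := by
  simp only [pochRatio, ascPochhammer_succ_eval]
  rw [mul_div_mul_comm]

lemma pochRatio_nonneg {a c : ℝ} (ha : 0 < a) (hc : 0 < c) (r : ℕ) : 0 ≤ pochRatio a c r :=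
  div_nonneg (ascPochhammer_pos r a ha).le (ascPochhammer_pos r c hc).le

lemma pochRatio_antitone {a c : ℝ} (ha : 0 < a) (hac : a ≤ c) : Antitone (pochRatio a c) := by
  refine antitone_nat_of_succ_le fun r => ?_
  rw [pochRatio_succ]
  have hr : (0 : ℝ) ≤ r := r.cast_nonneg
  refine mul_le_of_le_one_right (pochRatio_nonneg ha (ha.trans_le hac) r) ?_
  rw [div_le_one (by linarith)]
  linarith

/-- A forward difference of `(a)_r / (c)_r` is again such a ratio, with `c` shifted by one. This is
what makes the sequence completely monotone. -/
lemma pochRatio_sub_succ {a c : ℝ} (hc : 0 < c) (r : ℕ) :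
    pochRatio a c r - pochRatio a c (r + 1) = (c - a) / c * pochRatio a (c + 1) r := by
  have hr : (0 : ℝ) ≤ r := r.cast_nonneg
  have h1 : (ascPochhammer ℝ r).eval c ≠ 0 := (ascPochhammer_pos r c hc).ne'
  have h2 : (ascPochhammer ℝ r).eval (c + 1) ≠ 0 :=
    (ascPochhammer_pos r (c + 1) (by linarith)).ne'
  have h3 : c + r ≠ 0 := by linarith
  have h4 : c * (ascPochhammer ℝ r).eval (c + 1) = (ascPochhammer ℝ r).eval c * (c + r) := by
    rw [← ascPochhammer_succ_eval, ascPochhammer_succ_left]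
    simp
  rw [pochRatio_succ]
  have h5 : (ascPochhammer ℝ r).eval (c + 1) = (ascPochhammer ℝ r).eval c * (c + r) / c := by
    rw [← h4]; field_simp
  simp only [pochRatio, h5]
  field_simp
  ring

/-- Pascal's rule turns each sum into a nonnegative multiple of the one for `(m - 1, c + 1)`. -/
lemma alternating_sum_nonneg {a : ℝ} (ha : 0 < a) (m : ℕ) : ∀ c : ℝ, a ≤ c →
    0 ≤ ∑ ij ∈ Finset.HasAntidiagonal.antidiagonal m,
      ((m.choose ij.1 : ℕ) : ℝ) * ((-1) ^ ij.2 * pochRatio a c ij.2) := by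
  induction m with
  | zero => intro c _; simp [pochRatio_zero]
  | succ m ih =>
    intro c hac
    have hc : 0 < c := ha.trans_le hac
    have key : ∑ ij ∈ Finset.HasAntidiagonal.antidiagonal (m + 1),
        (((m + 1).choose ij.1 : ℕ) : ℝ) * ((-1) ^ ij.2 * pochRatio a c ij.2) =
        (c - a) / c * ∑ ij ∈ Finset.HasAntidiagonal.antidiagonal m,
          ((m.choose ij.1 : ℕ) : ℝ) * ((-1) ^ ij.2 * pochRatio a (c + 1) ij.2) := by
      rw [Finset.sum_antidiagonal_choose_succ_mul (fun _ j => (-1) ^ j * pochRatio a c j) m,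
        ← Finset.sum_add_distrib, Finset.mul_sum]
      refine Finset.sum_congr rfl fun ij hij => ?_
      rw [← m.choose_symm_of_eq_add (Finset.HasAntidiagonal.mem_antidiagonal.1 hij).symm]
      have h := pochRatio_sub_succ (a := a) hc ij.2
      rw [pow_succ]
      linear_combination ((m.choose ij.1 : ℕ) : ℝ) * (-1) ^ ij.2 * h
    rw [key]
    exact mul_nonneg (div_nonneg (by linarith) hc.le) (ih (c + 1) (by linarith))

lemma hasSum_exp (z : ℝ) : HasSum (fun r : ℕ => z ^ r / (Nat.factorial r)) (exp z) := by
  rw [Real.exp_eq_exp_ℝ]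
  exact NormedSpace.expSeries_div_hasSum_exp z

lemma abs_term_le {a c : ℝ} (ha : 0 < a) (hac : a ≤ c) (z : ℝ) (k r : ℕ) (hkr : k ≤ r) :
    ‖pochRatio a c r * z ^ r / (Nat.factorial r)‖ ≤
      pochRatio a c k * (|z| ^ r / (Nat.factorial r)) := by
  rw [mul_div_assoc, norm_mul, norm_div, norm_pow, Real.norm_eq_abs, Real.norm_eq_abs,
    Real.norm_natCast, abs_of_nonneg (pochRatio_nonneg ha (ha.trans_le hac) r)]
  exact mul_le_mul_of_nonneg_right (pochRatio_antitone ha hac hkr) (by positivity)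

lemma summable_norm_kummer {a c : ℝ} (ha : 0 < a) (hac : a ≤ c) (z : ℝ) :
    Summable fun r : ℕ => ‖pochRatio a c r * z ^ r / (Nat.factorial r)‖ :=
  Summable.of_nonneg_of_le (fun _ => norm_nonneg _)
    (fun r => abs_term_le ha hac z 0 r r.zero_le) ((hasSum_exp |z|).summable.mul_left _)

lemma abs_kummer_sub_sum_le {a c : ℝ} (ha : 0 < a) (hac : a ≤ c) (z : ℝ) (k : ℕ) :
    |kummer a c z - ∑ r ∈ Finset.range k, pochRatio a c r * z ^ r / (Nat.factorial r)| ≤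
      pochRatio a c k * exp |z| := by
  have hs := (summable_norm_kummer ha hac z).of_norm
  have he := hasSum_exp |z|
  have h1 : kummer a c z - ∑ r ∈ Finset.range k, pochRatio a c r * z ^ r / (Nat.factorial r)
      = ∑' r : ℕ, pochRatio a c (r + k) * z ^ (r + k) / (Nat.factorial (r + k)) := by
    rw [kummer, ← hs.sum_add_tsum_nat_add k, add_sub_cancel_left]
  have h2 : Summable fun r : ℕ => |z| ^ (r + k) / ((Nat.factorial (r + k) : ℕ) : ℝ) :=
    (summable_nat_add_iff k).2 he.summable
  have h3 : ∑' r : ℕ, |z| ^ (r + k) / ((Nat.factorial (r + k) : ℕ) : ℝ) ≤ exp |z| := by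
    rw [← he.tsum_eq, ← he.summable.sum_add_tsum_nat_add k]
    exact le_add_of_nonneg_left (Finset.sum_nonneg fun i _ => by positivity)
  rw [h1, ← Real.norm_eq_abs]
  refine (tsum_of_norm_bounded (h2.hasSum.mul_left (pochRatio a c k)) fun r =>
    abs_term_le ha hac z k (r + k) (Nat.le_add_left k r)).trans ?_
  exact mul_le_mul_of_nonneg_left h3 (pochRatio_nonneg ha (ha.trans_le hac) k)

lemma one_le_kummer {a c z : ℝ} (ha : 0 < a) (hac : a ≤ c) (hz : 0 ≤ z) : 1 ≤ kummer a c z := by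
  have hs := (summable_norm_kummer ha hac z).of_norm
  have h := hs.le_tsum 0 fun r _ => div_nonneg
    (mul_nonneg (pochRatio_nonneg ha (ha.trans_le hac) r) (pow_nonneg hz r)) (Nat.cast_nonneg _)
  simpa [kummer, pochRatio_zero] using h

lemma one_le_exp_mul_kummer_neg {a c z : ℝ} (ha : 0 < a) (hac : a ≤ c) (hz : 0 ≤ z) :
    1 ≤ exp z * kummer a c (-z) := by
  have he : Summable fun r : ℕ => ‖z ^ r / (Nat.factorial r : ℝ)‖ := (hasSum_exp z).summable.norm
  have hk := summable_norm_kummer ha hac (-z)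
  have hterm : ∀ m : ℕ, ∑ ij ∈ Finset.HasAntidiagonal.antidiagonal m,
      z ^ ij.1 / (Nat.factorial ij.1 : ℝ) *
      (pochRatio a c ij.2 * (-z) ^ ij.2 / (Nat.factorial ij.2 : ℝ)) =
      z ^ m / (Nat.factorial m : ℝ) * ∑ ij ∈ Finset.HasAntidiagonal.antidiagonal m,
        ((m.choose ij.1 : ℕ) : ℝ) * ((-1) ^ ij.2 * pochRatio a c ij.2) := by
    intro m
    rw [Finset.mul_sum]
    refine Finset.sum_congr rfl fun ij hij => ?_
    obtain rfl : ij.1 + ij.2 = m := Finset.HasAntidiagonal.mem_antidiagonal.1 hij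
    rw [Nat.cast_add_choose, neg_pow z, pow_add]
    have h1 : ((Nat.factorial ij.1 : ℕ) : ℝ) ≠ 0 := by positivity
    have h2 : ((Nat.factorial ij.2 : ℕ) : ℝ) ≠ 0 := by positivity
    have h3 : ((Nat.factorial (ij.1 + ij.2) : ℕ) : ℝ) ≠ 0 := by positivity
    field_simp
  have hs := (summable_norm_sum_mul_antidiagonal_of_summable_norm he hk).of_norm
  rw [← (hasSum_exp z).tsum_eq, kummer,
    tsum_mul_tsum_eq_tsum_sum_antidiagonal_of_summable_norm he hk]
  have h := hs.le_tsum 0 fun m _ => by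
    rw [hterm]
    exact mul_nonneg (by positivity) (alternating_sum_nonneg ha m c hac)
  simpa [pochRatio_zero] using h

lemma exp_neg_le_kummer {a c b L : ℝ} (ha : 0 < a) (hac : a ≤ c) (hb : |b| ≤ L) :
    exp (-L) ≤ kummer a c b := by
  have hL : 0 ≤ L := (abs_nonneg b).trans hb
  rcases le_total 0 b with h | h
  · exact (exp_le_one_iff.2 (by linarith)).trans (one_le_kummer ha hac h)
  · have h1 := one_le_exp_mul_kummer_neg ha hac (neg_nonneg.2 h)
    rw [neg_neg] at h1
    have h2 : exp b ≤ kummer a c b := by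
      have h3 := mul_le_mul_of_nonneg_left h1 (exp_pos b).le
      rwa [← mul_assoc, ← exp_add, add_neg_cancel, exp_zero, one_mul, mul_one] at h3
    exact (exp_le_exp.2 (by linarith [neg_abs_le b])).trans h2

/-- The numerator `N` for the quadratic truncations of both Kummer series: all terms of order
greater than `n⁻⁴` cancel. -/
lemma truncation_identity {x b : ℝ} (hx : 0 < x) :
    (1 / 2) / (x + 1) * (1 + 3 / 2 / (x + 2) * b + 15 / 8 / ((x + 2) * (x + 3)) * b ^ 2)
      - (1 + 1 / 2 / (x + 1) * b + 3 / 8 / ((x + 1) * (x + 2)) * b ^ 2)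
        * (1 / (2 * x) + (b - 1) / (2 * x ^ 2) + (2 * b ^ 2 - 7 * b + 2) / (4 * x ^ 3)) =
    ((-16 + 144 * b - 120 * b ^ 2 - 14 * b ^ 3) * x ^ 2
      + (-80 + 528 * b - 72 * b ^ 2 - 37 * b ^ 3 - 6 * b ^ 4) * x
      + (-96 + 288 * b + 54 * b ^ 2 + 15 * b ^ 3 - 18 * b ^ 4))
      / (32 * x ^ 3 * (x + 1) * (x + 2) * (x + 3)) := by
  have h1 : x + 1 ≠ 0 := by positivity
  have h2 : x + 2 ≠ 0 := by positivity
  have h3 : x + 3 ≠ 0 := by positivity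
  field_simp
  ring

lemma abs_truncation_le {L : ℝ} : ∃ K : ℝ, 0 ≤ K ∧ ∀ x : ℝ, 1 ≤ x → ∀ b ∈ Set.Icc (-L) L,
    |((-16 + 144 * b - 120 * b ^ 2 - 14 * b ^ 3) * x ^ 2
      + (-80 + 528 * b - 72 * b ^ 2 - 37 * b ^ 3 - 6 * b ^ 4) * x
      + (-96 + 288 * b + 54 * b ^ 2 + 15 * b ^ 3 - 18 * b ^ 4))
      / (32 * x ^ 3 * (x + 1) * (x + 2) * (x + 3))| ≤ K / x ^ 4 := by
  obtain ⟨K, hK⟩ := (isCompact_Icc (a := -L) (b := L)).exists_bound_of_continuousOn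
    (f := fun b : ℝ => |-16 + 144 * b - 120 * b ^ 2 - 14 * b ^ 3|
      + |-80 + 528 * b - 72 * b ^ 2 - 37 * b ^ 3 - 6 * b ^ 4|
      + |-96 + 288 * b + 54 * b ^ 2 + 15 * b ^ 3 - 18 * b ^ 4|) (by fun_prop)
  refine ⟨|K|, abs_nonneg K, fun x hx b hb => ?_⟩
  have h := (hK b hb).trans (le_abs_self K)
  rw [Real.norm_of_nonneg (by positivity)] at h
  generalize -16 + 144 * b - 120 * b ^ 2 - 14 * b ^ 3 = p at *
  generalize -80 + 528 * b - 72 * b ^ 2 - 37 * b ^ 3 - 6 * b ^ 4 = q at *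
  generalize -96 + 288 * b + 54 * b ^ 2 + 15 * b ^ 3 - 18 * b ^ 4 = s at *
  have hx0 : 0 < x := by linarith
  have hx2 : x ≤ x ^ 2 := by nlinarith
  have hx3 : 1 ≤ x ^ 2 := by nlinarith
  have hnum : |p * x ^ 2 + q * x + s| ≤ |K| * x ^ 2 := by
    calc |p * x ^ 2 + q * x + s| ≤ |p * x ^ 2| + |q * x| + |s| := abs_add_three _ _ _
      _ = |p| * x ^ 2 + |q| * x + |s| := by
        rw [abs_mul, abs_mul, abs_of_pos hx0, abs_of_nonneg (sq_nonneg x)]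
      _ ≤ |p| * x ^ 2 + |q| * x ^ 2 + |s| * x ^ 2 := by
        gcongr
        exact le_mul_of_one_le_right (abs_nonneg s) hx3
      _ = (|p| + |q| + |s|) * x ^ 2 := by ring
      _ ≤ |K| * x ^ 2 := by gcongr
  have hden : x ^ 6 ≤ 32 * x ^ 3 * (x + 1) * (x + 2) * (x + 3) := by
    calc x ^ 6 = 1 * x ^ 3 * x * x * x := by ring
      _ ≤ 32 * x ^ 3 * (x + 1) * (x + 2) * (x + 3) := by gcongr <;> linarith
  rw [abs_div, abs_of_pos (a := 32 * x ^ 3 * (x + 1) * (x + 2) * (x + 3)) (by positivity)]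
  calc |p * x ^ 2 + q * x + s| / (32 * x ^ 3 * (x + 1) * (x + 2) * (x + 3))
      ≤ |K| * x ^ 2 / x ^ 6 := by gcongr
    _ = |K| / x ^ 4 := by field_simp

lemma abs_kummer_half_sub_le {x b L : ℝ} (hx : 1 ≤ x) (hb : |b| ≤ L) :
    |kummer (1 / 2) (x + 1) b
      - (1 + 1 / 2 / (x + 1) * b + 3 / 8 / ((x + 1) * (x + 2)) * b ^ 2)| ≤ 2 * exp L / x ^ 3 := by
  have h := abs_kummer_sub_sum_le (a := 1 / 2) (c := x + 1) (by norm_num) (by linarith) b 3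
  have h0 : 0 < x := by linarith
  have hp : pochRatio (1 / 2) (x + 1) 3 ≤ 2 / x ^ 3 := by
    simp only [pochRatio_succ, pochRatio_zero]
    push_cast
    calc 1 * ((1 / 2 + 0) / (x + 1 + 0)) * ((1 / 2 + 1) / (x + 1 + 1)) * ((1 / 2 + 2) / (x + 1 + 2))
        = (15 / 8) / ((x + 1) * (x + 1 + 1) * (x + 1 + 2)) := by field_simp; ring
      _ ≤ 2 / (x * x * x) := by gcongr <;> linarith
      _ = 2 / x ^ 3 := by ring
  have hsum : ∑ r ∈ Finset.range 3, pochRatio (1 / 2) (x + 1) r * b ^ r / (Nat.factorial r) =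
      1 + 1 / 2 / (x + 1) * b + 3 / 8 / ((x + 1) * (x + 2)) * b ^ 2 := by
    simp only [Finset.sum_range_succ, Finset.sum_range_zero, pochRatio_succ, pochRatio_zero,
      Nat.factorial]
    push_cast
    have e : x + 1 + 1 = x + 2 := by ring
    rw [e]
    field_simp
    ring
  rw [hsum] at h
  refine h.trans ?_
  calc pochRatio (1 / 2) (x + 1) 3 * exp |b| ≤ 2 / x ^ 3 * exp L := by gcongr
    _ = 2 * exp L / x ^ 3 := by ring

lemma abs_kummer_three_halves_sub_le {x b L : ℝ} (hx : 1 ≤ x) (hb : |b| ≤ L) :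
    |kummer (3 / 2) (x + 2) b
      - (1 + 3 / 2 / (x + 2) * b + 15 / 8 / ((x + 2) * (x + 3)) * b ^ 2)| ≤
      14 * exp L / x ^ 3 := by
  have h := abs_kummer_sub_sum_le (a := 3 / 2) (c := x + 2) (by norm_num) (by linarith) b 3
  have h0 : 0 < x := by linarith
  have hp : pochRatio (3 / 2) (x + 2) 3 ≤ 14 / x ^ 3 := by
    simp only [pochRatio_succ, pochRatio_zero]
    push_cast
    calc 1 * ((3 / 2 + 0) / (x + 2 + 0)) * ((3 / 2 + 1) / (x + 2 + 1)) * ((3 / 2 + 2) / (x + 2 + 2))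
        = (105 / 8) / ((x + 2) * (x + 2 + 1) * (x + 2 + 2)) := by field_simp; ring
      _ ≤ 14 / (x * x * x) := by gcongr <;> linarith
      _ = 14 / x ^ 3 := by ring
  have hsum : ∑ r ∈ Finset.range 3, pochRatio (3 / 2) (x + 2) r * b ^ r / (Nat.factorial r) =
      1 + 3 / 2 / (x + 2) * b + 15 / 8 / ((x + 2) * (x + 3)) * b ^ 2 := by
    simp only [Finset.sum_range_succ, Finset.sum_range_zero, pochRatio_succ, pochRatio_zero,
      Nat.factorial]
    push_cast
    have e : x + 2 + 1 = x + 3 := by ring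
    rw [e]
    field_simp
    ring
  rw [hsum] at h
  refine h.trans ?_
  calc pochRatio (3 / 2) (x + 2) 3 * exp |b| ≤ 14 / x ^ 3 * exp L := by gcongr
    _ = 14 * exp L / x ^ 3 := by ring

/-- The factor `T` is `O(1/x)`, uniformly for `|b| ≤ L`. -/
lemma abs_approx_le {L : ℝ} : ∃ K : ℝ, 0 ≤ K ∧ ∀ x : ℝ, 1 ≤ x → ∀ b ∈ Set.Icc (-L) L,
    |1 / (2 * x) + (b - 1) / (2 * x ^ 2) + (2 * b ^ 2 - 7 * b + 2) / (4 * x ^ 3)| ≤ K / x := by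
  obtain ⟨K, hK⟩ := (isCompact_Icc (a := -L) (b := L)).exists_bound_of_continuousOn
    (f := fun b : ℝ => 1 + |b - 1| + |2 * b ^ 2 - 7 * b + 2|) (by fun_prop)
  refine ⟨|K|, abs_nonneg K, fun x hx b hb => ?_⟩
  have h := (hK b hb).trans (le_abs_self K)
  rw [Real.norm_of_nonneg (by positivity)] at h
  have hx0 : 0 < x := by linarith
  have hx2 : x ≤ 2 * x ^ 2 := by nlinarith
  have hx3 : x ≤ 4 * x ^ 3 := by nlinarith [mul_pos hx0 hx0]
  refine (abs_add_three _ _ _).trans ?_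
  rw [abs_div, abs_div, abs_div, abs_one, abs_of_pos (a := 2 * x) (by positivity),
    abs_of_pos (a := 2 * x ^ 2) (by positivity), abs_of_pos (a := 4 * x ^ 3) (by positivity)]
  calc 1 / (2 * x) + |b - 1| / (2 * x ^ 2) + |2 * b ^ 2 - 7 * b + 2| / (4 * x ^ 3)
      ≤ 1 / x + |b - 1| / x + |2 * b ^ 2 - 7 * b + 2| / x := by gcongr; linarith
    _ = (1 + |b - 1| + |2 * b ^ 2 - 7 * b + 2|) / x := by ring
    _ ≤ |K| / x := by gcongr

lemma abs_numerator_le (L : ℝ) : ∃ K : ℝ, 0 ≤ K ∧ ∀ x : ℝ, 1 ≤ x → ∀ b ∈ Set.Icc (-L) L,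
    |(1 / 2) / (x + 1) * kummer (3 / 2) (x + 2) b - kummer (1 / 2) (x + 1) b
      * (1 / (2 * x) + (b - 1) / (2 * x ^ 2) + (2 * b ^ 2 - 7 * b + 2) / (4 * x ^ 3))| ≤
      K / x ^ 4 := by
  obtain ⟨K₁, hK₁, h₁⟩ := abs_truncation_le (L := L)
  obtain ⟨K₂, hK₂, h₂⟩ := abs_approx_le (L := L)
  refine ⟨K₁ + 14 * exp L + 2 * exp L * K₂, by positivity, fun x hx b hb => ?_⟩
  have hx0 : 0 < x := by linarith
  have hbL : |b| ≤ L := abs_le.2 hb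
  have hD := h₁ x hx b hb
  rw [← truncation_identity hx0] at hD
  have hT := h₂ x hx b hb
  have hA := abs_kummer_half_sub_le hx hbL
  have hB := abs_kummer_three_halves_sub_le hx hbL
  set T := 1 / (2 * x) + (b - 1) / (2 * x ^ 2) + (2 * b ^ 2 - 7 * b + 2) / (4 * x ^ 3)
  set P := 1 + 1 / 2 / (x + 1) * b + 3 / 8 / ((x + 1) * (x + 2)) * b ^ 2
  set Q := 1 + 3 / 2 / (x + 2) * b + 15 / 8 / ((x + 2) * (x + 3)) * b ^ 2
  set A := kummer (1 / 2) (x + 1) b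
  set B := kummer (3 / 2) (x + 2) b
  have hc : |(1 / 2) / (x + 1)| ≤ 1 / x := by
    rw [abs_of_pos (by positivity)]
    gcongr <;> linarith
  have e : (1 / 2) / (x + 1) * B - A * T =
      ((1 / 2) / (x + 1) * Q - P * T) + (1 / 2) / (x + 1) * (B - Q) + -((A - P) * T) := by ring
  rw [e]
  calc _ ≤ |(1 / 2) / (x + 1) * Q - P * T| + |(1 / 2) / (x + 1) * (B - Q)| + |-((A - P) * T)| :=
        abs_add_three _ _ _
    _ = |(1 / 2) / (x + 1) * Q - P * T| + |(1 / 2) / (x + 1)| * |B - Q| + |A - P| * |T| := by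
        rw [abs_neg, abs_mul, abs_mul]
    _ ≤ K₁ / x ^ 4 + 1 / x * (14 * exp L / x ^ 3) + 2 * exp L / x ^ 3 * (K₂ / x) := by gcongr
    _ = (K₁ + 14 * exp L + 2 * exp L * K₂) / x ^ 4 := by field_simp



/-- Uniform comparison of the magnetic Steklov eigenvalues `λ_n(b)` of the disk
(constant field, potential `b(-y dx + x dy)`) with their explicit approximations
`μ_n(b)`: for each `L > 0` there is `C > 0` with `|λ_n(b) - μ_n(b)| ≤ C |b| / n⁴`
for all `n ≥ 1` and `b ∈ [-L, L]`. Here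
`λ_n(b) = n - b + 2b ((1/2)/(n+1)) M(3/2, n+2, b)/M(1/2, n+1, b)` and
`μ_n(b) = n - b + 2b (1/(2n) + (b-1)/(2n²) + (2b² - 7b + 2)/(4n³))`, `M` being the
Kummer confluent hypergeometric function. -/
theorem stmt_18 (M : ℝ → ℝ → ℝ → ℝ)
    (hM : ∀ a c z : ℝ, M a c z =
      ∑' r : ℕ, ((ascPochhammer ℝ r).eval a / (ascPochhammer ℝ r).eval c)
        * z^r / (Nat.factorial r))
    (lam μ : ℕ → ℝ → ℝ)
    (hlam : ∀ n : ℕ, 1 ≤ n → ∀ b : ℝ, lam n b =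
      (n:ℝ) - b + 2*b * ((1/2) / ((n:ℝ) + 1))
        * M (3/2) ((n:ℝ) + 2) b / M (1/2) ((n:ℝ) + 1) b)
    (hμ : ∀ n : ℕ, 1 ≤ n → ∀ b : ℝ, μ n b =
      (n:ℝ) - b + 2*b * (1/(2*(n:ℝ)) + (b - 1)/(2*(n:ℝ)^2)
        + (2*b^2 - 7*b + 2)/(4*(n:ℝ)^3))) :
    ∀ L : ℝ, 0 < L → ∃ C : ℝ, 0 < C ∧
      ∀ n : ℕ, 1 ≤ n → ∀ b ∈ Set.Icc (-L) L,
        |lam n b - μ n b| ≤ C * |b| / (n:ℝ)^4 := by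
  intro L hL
  obtain ⟨K, hK, h⟩ := abs_numerator_le L
  refine ⟨2 * K * exp L + 1, by positivity, fun n hn b hb => ?_⟩
  have hx : (1 : ℝ) ≤ n := by exact_mod_cast hn
  have hx0 : (0 : ℝ) < n := by linarith
  have hMk : ∀ a c z, M a c z = kummer a c z := hM
  have hN := h n hx b hb
  have hlow : exp (-L) ≤ kummer (1 / 2) ((n : ℝ) + 1) b :=
    exp_neg_le_kummer (by norm_num) (by linarith) (abs_le.2 hb)
  have hpos : 0 < kummer (1 / 2) ((n : ℝ) + 1) b := (exp_pos _).trans_le hlow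
  rw [hlam n hn, hμ n hn, hMk, hMk]
  have e : (n : ℝ) - b + 2 * b * ((1 / 2) / ((n : ℝ) + 1)) * kummer (3 / 2) ((n : ℝ) + 2) b
        / kummer (1 / 2) ((n : ℝ) + 1) b
      - ((n : ℝ) - b + 2 * b * (1 / (2 * (n : ℝ)) + (b - 1) / (2 * (n : ℝ) ^ 2)
        + (2 * b ^ 2 - 7 * b + 2) / (4 * (n : ℝ) ^ 3))) =
      2 * b * (((1 / 2) / ((n : ℝ) + 1) * kummer (3 / 2) ((n : ℝ) + 2) b
        - kummer (1 / 2) ((n : ℝ) + 1) b * (1 / (2 * (n : ℝ)) + (b - 1) / (2 * (n : ℝ) ^ 2)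
        + (2 * b ^ 2 - 7 * b + 2) / (4 * (n : ℝ) ^ 3))) / kummer (1 / 2) ((n : ℝ) + 1) b) := by
    generalize 1 / (2 * (n : ℝ)) + (b - 1) / (2 * (n : ℝ) ^ 2)
      + (2 * b ^ 2 - 7 * b + 2) / (4 * (n : ℝ) ^ 3) = T
    rw [sub_div, mul_div_cancel_left₀ _ hpos.ne']
    ring
  rw [e, abs_mul, abs_mul, abs_div, abs_two, abs_of_pos hpos]
  calc _ ≤ 2 * |b| * (K / (n : ℝ) ^ 4 / exp (-L)) := by gcongr
    _ = 2 * K * exp L * |b| / (n : ℝ) ^ 4 := by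
      rw [exp_neg]
      field_simp
    _ ≤ (2 * K * exp L + 1) * |b| / (n : ℝ) ^ 4 := by
      gcongr
      linarith
end

section
/- For b ∈ ℝ let λ₀(b) = b·I₀′(b/2)/I₀(b/2) with I₀(z) = ∑_{k ≥ 0} z^{2k}/(2^{2k}(k!)²); for n ≥ 1 let λ_n(b) = n − b + 2b·((1/2)/(n+1))·M(3/2, n+2, b)/M(1/2, n+1, b), where M(a, c, z) = ∑_{r ≥ 0} ((a)_r/(c)_r)·z^r/r!, and μ_n(b) = n − b + 2b·(1/(2n) + (b − 1)/(2n²) + (2b² − 7b + 2)/(4n³)). Define E(b) = (1 − π²/3 + 7ζ(3))·b² − λ₀(b) − ∑_{n ≥ 1}(λ_n(b) − μ_n(b)) − ∑_{n ≥ 1}(λ_n(−b) − μ_n(−b)) and F(b) = (1/3780)·((5670 − 2520π² + 126π⁴ + 4π⁶ − 15120ζ(3) − 7560ζ(5))·b² + (126π⁴ + 57π⁶ − 7560ζ(3) − 34020ζ(5))·b⁴ + 4π⁶·b⁶) + λ₀(b)²/2 + (1/2)∑_{n ≥ 1}(λ_n(b)² − μ_n(b)²) + (1/2)∑_{n ≥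 1}(λ_n(−b)² − μ_n(−b)²). Then for every L > 0 there exists C > 0 such that for all b ∈ [−L, L] and all t ∈ (0, 1/2), |exp(−t·λ₀(b)) + ∑_{n ≥ 1} exp(−t·λ_n(b)) + ∑_{n ≥ 1} exp(−t·λ_n(−b)) − coth(t/2) − E(b)·t − F(b)·t² + (b²/2)·t³·log t| ≤ C·|b|·t³. -/
open Real

/-!
Write `m = n ≥ 1`, `x = 1/m` and `λ_n(±b) = m + a_±`. The eigenvalues are compared in pairs
`e^{-tλ_n(b)} + e^{-tλ_n(-b)} - 2e^{-tm}`; since `coth (t/2) = 1 + 2 ∑ e^{-tm}`, summing over `m`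
and adding `e^{-tλ₀(b)} - 1` gives the relative heat trace.

* *Eigenvalues.* Truncating Kummer's series after the quadratic term shows
  `λ_n(b) = μ_n(b) + O(|b| x⁴)` uniformly on bounded intervals (`kummer_ratio_asymp`). The
  denominator `M(1/2, n+1, b)` is at least `e^{-|b|}` by Kummer's transformation (`kummer_lower`).
* *One pair.* Taylor expansion in `t` gives
  `e^{-tm}(-t(a₊ + a₋) + t²(a₊² + a₋²)/2)` up to an error `O(|b|(t⁴e^{-tm} + t³x²))`: the sum
  `a₊ + a₋ = 2b²x² - 7b²x³ + O(x⁴)` has no terms of low order, so `a₊³ + a₋³ = O(x²)` too.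
  Terms of size `O(x³)` or smaller allow `e^{-tm}` to be replaced by its Taylor polynomial
  (`pair_expansion`).
* *Summation.* The low-order terms sum to `Li_k(e^{-t})` for `k ≤ 3`. Explicit formulas for
  `k = 0, 1` and integration in `t` for `k = 2, 3` give their expansions, which produce the
  `t³ log t` term; all the other terms sum to the coefficients of `t` and `t²` (`pair_trace`).
  The constants in `F` come from the terms `x³, …, x⁶` of
  `(μ_n(b) - m)² + (μ_n(-b) - m)²`, summed with `ζ(3)`, `ζ(4)`, `ζ(5)`, `ζ(6)`
  (`tsum_zetaPoly`).
* *The mode `λ₀`.* Here `λ₀(b) = O(|b|)`, so the second-order Taylor polynomial of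
  `e^{-tλ₀(b)}` is enough (`mode_zero_expansion`).
-/

/-! ### Kummer's function -/

/-- The general term of Kummer's series `M(a, c, z) = ∑ (a)_r / (c)_r * z ^ r / r!`. -/
noncomputable def kummerTerm (a c z : ℝ) (r : ℕ) : ℝ :=
  ((ascPochhammer ℝ r).eval a / (ascPochhammer ℝ r).eval c) * z ^ r / (Nat.factorial r)

lemma poch_mono {a c : ℝ} (ha : 0 ≤ a) (hac : a ≤ c) (r : ℕ) :
    0 ≤ (ascPochhammer ℝ r).eval a ∧
      (ascPochhammer ℝ r).eval a ≤ (ascPochhammer ℝ r).eval c := by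
  induction r with
  | zero => simp
  | succ r ih =>
    rw [ascPochhammer_succ_eval, ascPochhammer_succ_eval]
    have hr : (0 : ℝ) ≤ r := Nat.cast_nonneg r
    exact ⟨mul_nonneg ih.1 (by linarith),
      mul_le_mul ih.2 (by linarith) (by linarith) (ih.1.trans ih.2)⟩

lemma poch_ratio {a c : ℝ} (ha : 0 ≤ a) (hc : 0 < c) (hac : a ≤ c) (r : ℕ) :
    0 ≤ (ascPochhammer ℝ r).eval a / (ascPochhammer ℝ r).eval c ∧
      (ascPochhammer ℝ r).eval a / (ascPochhammer ℝ r).eval c ≤ 1 := by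
  have h := poch_mono ha hac r
  have hp := ascPochhammer_pos r c hc
  exact ⟨div_nonneg h.1 hp.le, (div_le_one hp).2 h.2⟩

lemma poch_add (a : ℝ) (k j : ℕ) :
    (ascPochhammer ℝ (k + j)).eval a =
      (ascPochhammer ℝ k).eval a * (ascPochhammer ℝ j).eval (a + k) := by
  rw [← ascPochhammer_mul]
  simp

lemma poch_succ_left (a : ℝ) (j : ℕ) :
    (ascPochhammer ℝ (j + 1)).eval a = a * (ascPochhammer ℝ j).eval (a + 1) := by
  rw [ascPochhammer_succ_left]
  simp

lemma kummerTerm_abs_le {a c : ℝ} (ha : 0 ≤ a) (hc : 0 < c) (hac : a ≤ c) (z : ℝ) (r : ℕ) :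
    |kummerTerm a c z r| ≤ |z| ^ r / (Nat.factorial r) := by
  have h := poch_ratio ha hc hac r
  unfold kummerTerm
  rw [abs_div, abs_mul, abs_of_nonneg h.1, abs_pow, Nat.abs_cast]
  gcongr
  exact mul_le_of_le_one_left (by positivity) h.2

lemma kummerTerm_summable {a c : ℝ} (ha : 0 ≤ a) (hc : 0 < c) (hac : a ≤ c) (z : ℝ) :
    Summable (fun r => ‖kummerTerm a c z r‖) :=
  Summable.of_nonneg_of_le (fun _ => norm_nonneg _)
    (fun r => kummerTerm_abs_le ha hc hac z r) (Real.summable_pow_div_factorial |z|)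

/-- Truncating Kummer's series after its quadratic term costs at most
`(a)₃ / (c)₃ * |z| ^ 3 * e ^ |z|`, since `(a + 3)_j ≤ (c + 3)_j` and `j! ≤ (j + 3)!`. -/
lemma kummer_tail {a c : ℝ} (ha : 0 ≤ a) (hc : 0 < c) (hac : a ≤ c) (z : ℝ) :
    |(∑' r, kummerTerm a c z r)
        - (1 + a / c * z + a * (a + 1) / (c * (c + 1)) * z ^ 2 / 2)|
      ≤ a * (a + 1) * (a + 2) / (c * (c + 1) * (c + 2)) * |z| ^ 3 * exp |z| := by
  have hs := (kummerTerm_summable ha hc hac z).of_norm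
  have h3 : ∀ x : ℝ, (ascPochhammer ℝ 3).eval x = x * (x + 1) * (x + 2) := by
    intro x; simp [ascPochhammer_succ_eval]
  have hsplit := hs.sum_add_tsum_nat_add 3
  have hfirst : ∑ i ∈ Finset.range 3, kummerTerm a c z i
      = 1 + a / c * z + a * (a + 1) / (c * (c + 1)) * z ^ 2 / 2 := by
    simp [Finset.sum_range_succ, kummerTerm, ascPochhammer_succ_eval]
  rw [← hsplit, hfirst, add_sub_cancel_left]
  have hexp : HasSum (fun j : ℕ => a * (a + 1) * (a + 2) / (c * (c + 1) * (c + 2)) * |z| ^ 3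
      * (|z| ^ j / (Nat.factorial j)))
      (a * (a + 1) * (a + 2) / (c * (c + 1) * (c + 2)) * |z| ^ 3 * exp |z|) := by
    apply HasSum.mul_left
    rw [Real.exp_eq_exp_ℝ]
    exact NormedSpace.expSeries_div_hasSum_exp |z|
  rw [← Real.norm_eq_abs]
  refine tsum_of_norm_bounded hexp (fun j => ?_)
  have hr := poch_ratio (a := a + 3) (c := c + 3) (by linarith) (by linarith) (by linarith) j
  have hfac : ((Nat.factorial j : ℕ) : ℝ) ≤ (Nat.factorial (j + 3) : ℕ) := by
    exact_mod_cast Nat.factorial_le (by omega)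
  have heq : kummerTerm a c z (j + 3) = a * (a + 1) * (a + 2) / (c * (c + 1) * (c + 2)) *
      ((ascPochhammer ℝ j).eval (a + 3) / (ascPochhammer ℝ j).eval (c + 3)) *
      (z ^ 3 * z ^ j) / (Nat.factorial (j + 3)) := by
    unfold kummerTerm
    rw [add_comm j 3, poch_add, poch_add, h3, h3, pow_add, mul_div_mul_comm]
    push_cast
    ring
  have hc3 : 0 ≤ a * (a + 1) * (a + 2) / (c * (c + 1) * (c + 2)) := by positivity
  rw [heq, Real.norm_eq_abs, abs_div, abs_mul, abs_mul, abs_of_nonneg hr.1, abs_of_nonneg hc3,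
    abs_mul, abs_pow, abs_pow, Nat.abs_cast, mul_assoc _ (|z| ^ 3), ← mul_div_assoc,
    mul_div_assoc, mul_div_assoc (a * (a + 1) * (a + 2) / (c * (c + 1) * (c + 2)))]
  rw [mul_assoc]
  refine mul_le_mul_of_nonneg_left ?_ hc3
  calc (ascPochhammer ℝ j).eval (a + 3) / (ascPochhammer ℝ j).eval (c + 3)
        * (|z| ^ 3 * |z| ^ j / (Nat.factorial (j + 3)))
      ≤ 1 * (|z| ^ 3 * |z| ^ j / (Nat.factorial j)) := by
        gcongr
        exact hr.2
    _ = |z| ^ 3 * (|z| ^ j / (Nat.factorial j)) := by rw [one_mul, mul_div_assoc]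

/-- The Chu–Vandermonde identity `∑ C(m, k) (-1)^k (a)_k / (c)_k = (c - a)_m / (c)_m`. -/
lemma chu_vandermonde (m : ℕ) : ∀ {a c : ℝ}, 0 < c →
    ∑ ij ∈ Finset.HasAntidiagonal.antidiagonal m, (m.choose ij.1 : ℝ) * ((-1) ^ ij.1 *
      ((ascPochhammer ℝ ij.1).eval a / (ascPochhammer ℝ ij.1).eval c))
    = (ascPochhammer ℝ m).eval (c - a) / (ascPochhammer ℝ m).eval c := by
  induction m with
  | zero => intro a c hc; simp
  | succ m ih =>
    intro a c hc
    rw [Finset.sum_antidiagonal_choose_succ_mul (fun i _ => (-1) ^ i *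
      ((ascPochhammer ℝ i).eval a / (ascPochhammer ℝ i).eval c)), ih hc]
    have h2 : ∑ ij ∈ Finset.HasAntidiagonal.antidiagonal m, (m.choose ij.2 : ℝ) * ((-1) ^ (ij.1 + 1) *
        ((ascPochhammer ℝ (ij.1 + 1)).eval a / (ascPochhammer ℝ (ij.1 + 1)).eval c))
        = -(a / c) * ∑ ij ∈ Finset.HasAntidiagonal.antidiagonal m, (m.choose ij.1 : ℝ) * ((-1) ^ ij.1 *
      ((ascPochhammer ℝ ij.1).eval (a + 1) / (ascPochhammer ℝ ij.1).eval (c + 1))) := by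
      rw [Finset.mul_sum]
      refine Finset.sum_congr rfl (fun ij hij => ?_)
      have hm : ij.1 + ij.2 = m := Finset.HasAntidiagonal.mem_antidiagonal.1 hij
      rw [Nat.choose_symm_of_eq_add (hm.symm.trans (add_comm _ _)), poch_succ_left,
        poch_succ_left, mul_div_mul_comm]
      ring
    rw [h2, ih (by linarith : 0 < c + 1)]
    have e1 : c + 1 - (a + 1) = c - a := by ring
    have hp := ascPochhammer_pos m c hc
    have hp1 := ascPochhammer_pos m (c + 1) (by linarith)
    have hcm : 0 < c + m := by positivity
    have key : c * (ascPochhammer ℝ m).eval (c + 1) = (ascPochhammer ℝ m).eval c * (c + m) := by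
      rw [← poch_succ_left, ascPochhammer_succ_eval]
    have hq : (ascPochhammer ℝ m).eval (c + 1) = (ascPochhammer ℝ m).eval c * (c + m) / c := by
      rw [← key]; field_simp
    rw [e1, ascPochhammer_succ_eval, ascPochhammer_succ_eval, hq]
    field_simp
    ring

/-- Kummer's transformation `e ^ x * M(a, c, -x) = M(c - a, c, x)`, coefficient by coefficient. -/
lemma kummer_cauchy (a c x : ℝ) (hc : 0 < c) (m : ℕ) :
    ∑ ij ∈ Finset.HasAntidiagonal.antidiagonal m,
        kummerTerm a c (-x) ij.1 * (x ^ ij.2 / (Nat.factorial ij.2))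
      = kummerTerm (c - a) c x m := by
  have h := chu_vandermonde m (a := a) hc
  unfold kummerTerm
  rw [← h, Finset.sum_mul, Finset.sum_div]
  refine Finset.sum_congr rfl (fun ij hij => ?_)
  have hm : ij.1 + ij.2 = m := Finset.HasAntidiagonal.mem_antidiagonal.1 hij
  have hch : (m.choose ij.1 : ℝ) * (Nat.factorial ij.1) * (Nat.factorial ij.2)
      = Nat.factorial m := by
    have := Nat.add_choose_mul_factorial_mul_factorial ij.1 ij.2
    rw [hm, ← Nat.choose_symm_of_eq_add hm.symm] at this
    exact_mod_cast this
  have hx : (-x) ^ ij.1 * x ^ ij.2 = (-1) ^ ij.1 * x ^ m := by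
    rw [neg_pow, ← hm, pow_add]; ring
  have f1 : ((Nat.factorial ij.1 : ℕ) : ℝ) ≠ 0 := by positivity
  have f2 : ((Nat.factorial ij.2 : ℕ) : ℝ) ≠ 0 := by positivity
  have hch0 : (m.choose ij.1 : ℝ) ≠ 0 := by
    have : 0 < m.choose ij.1 := Nat.choose_pos (by omega)
    positivity
  rw [← hch, show ∀ p q : ℝ, p * (-x) ^ ij.1 / (Nat.factorial ij.1) * (x ^ ij.2 / q)
      = p * ((-x) ^ ij.1 * x ^ ij.2) / ((Nat.factorial ij.1) * q) by intro p q; ring, hx]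
  field_simp

lemma kummer_one_le {a c x : ℝ} (ha : 0 ≤ a) (hc : 0 < c) (hac : a ≤ c) (hx : 0 ≤ x) :
    1 ≤ ∑' r, kummerTerm a c x r := by
  have h := (kummerTerm_summable ha hc hac x).of_norm.le_tsum 0 (fun r _ => by
    have := (poch_ratio ha hc hac r).1
    unfold kummerTerm
    positivity)
  simpa [kummerTerm] using h

/-- For `0 ≤ a ≤ c`, Kummer's transformation `M(a, c, -x) = e ^ (-x) M(c - a, c, x)` gives a
lower bound for `M(a, c, z)` that does not depend on `a` and `c`. -/
lemma kummer_lower {a c : ℝ} (ha : 0 ≤ a) (hc : 0 < c) (hac : a ≤ c) (z : ℝ) :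
    exp (-|z|) ≤ ∑' r, kummerTerm a c z r := by
  rcases le_total 0 z with hz | hz
  · refine le_trans ?_ (kummer_one_le ha hc hac hz)
    exact Real.exp_le_one_iff.2 (neg_nonpos.2 (abs_nonneg z))
  · obtain ⟨x, rfl⟩ : ∃ x, z = -x := ⟨-z, by ring⟩
    have hx : 0 ≤ x := by linarith
    rw [abs_neg, abs_of_nonneg hx]
    have hexp : exp x = ∑' j : ℕ, x ^ j / (Nat.factorial j : ℝ) := by
      rw [Real.exp_eq_exp_ℝ, NormedSpace.exp_eq_tsum_div]
    have hmul : (∑' r, kummerTerm a c (-x) r) * exp x = ∑' r, kummerTerm (c - a) c x r := by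
      rw [hexp, tsum_mul_tsum_eq_tsum_sum_antidiagonal_of_summable_norm
        (kummerTerm_summable ha hc hac (-x)) (Real.summable_pow_div_factorial x).norm]
      exact tsum_congr (fun m => kummer_cauchy a c x hc m)
    have h1 := kummer_one_le (a := c - a) (c := c) (x := x) (by linarith) hc (by linarith) hx
    rw [← hmul] at h1
    rw [Real.exp_neg, inv_le_iff_one_le_mul₀ (exp_pos x)]
    exact h1

/-! ### Asymptotics of the eigenvalues -/

lemma exists_abs_bound (f : ℝ → ℝ) (hf : Continuous f) (L : ℝ) :
    ∃ K, 0 ≤ K ∧ ∀ b ∈ Set.Icc (-L) L, |f b| ≤ K := by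
  obtain ⟨K, hK⟩ := (isCompact_Icc (a := -L) (b := L)).exists_bound_of_continuousOn hf.continuousOn
  exact ⟨|K|, abs_nonneg K, fun b hb => (hK b hb).trans (le_abs_self K)⟩

/-- With both Kummer series replaced by their quadratic truncations, numerator minus asymptotic
expansion times denominator is an explicit rational function of size `n ^ (-4)`. -/
lemma kummer_poly_remainder {b n K0 K1 K2 : ℝ} (hn : 1 ≤ n) (hK0 : 0 ≤ K0) (hK1 : 0 ≤ K1)
    (hK2 : 0 ≤ K2)
    (h0 : |-12 + 36*b + 27/4*b^2 + 15/8*b^3 - 9/4*b^4| ≤ K0)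
    (h1 : |-10 + 66*b - 9*b^2 - 37/8*b^3 - 3/4*b^4| ≤ K1)
    (h2 : |-2 + 18*b - 15*b^2 - 7/4*b^3| ≤ K2) :
    |(1/2) / (n + 1) *
        (1 + 3/2 / (n + 2) * b + 3/2 * (3/2 + 1) / ((n + 2) * (n + 2 + 1)) * b ^ 2 / 2)
      - (1/(2*n) + (b - 1)/(2*n^2) + (2*b^2 - 7*b + 2)/(4*n^3)) *
        (1 + 1/2 / (n + 1) * b + 1/2 * (1/2 + 1) / ((n + 1) * (n + 1 + 1)) * b ^ 2 / 2)|
      ≤ (K0 + K1 + K2) / n ^ 4 := by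
  have hn0 : 0 < n := by linarith
  have e : (1/2) / (n + 1) *
      (1 + 3/2 / (n + 2) * b + 3/2 * (3/2 + 1) / ((n + 2) * (n + 2 + 1)) * b ^ 2 / 2)
    - (1/(2*n) + (b - 1)/(2*n^2) + (2*b^2 - 7*b + 2)/(4*n^3)) *
      (1 + 1/2 / (n + 1) * b + 1/2 * (1/2 + 1) / ((n + 1) * (n + 1 + 1)) * b ^ 2 / 2) =
      ((-12 + 36*b + 27/4*b^2 + 15/8*b^3 - 9/4*b^4)
      + (-10 + 66*b - 9*b^2 - 37/8*b^3 - 3/4*b^4) * n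
      + (-2 + 18*b - 15*b^2 - 7/4*b^3) * n^2) / (4*n^3*(n+1)*(n+2)*(n+3)) := by
    rw [show n + 2 + 1 = n + 3 by ring, show n + 1 + 1 = n + 2 by ring]
    field_simp
    ring
  rw [e, abs_div, abs_of_pos (by positivity : 0 < 4*n^3*(n+1)*(n+2)*(n+3)),
    div_le_div_iff₀ (by positivity) (by positivity)]
  have num : |(-12 + 36*b + 27/4*b^2 + 15/8*b^3 - 9/4*b^4)
      + (-10 + 66*b - 9*b^2 - 37/8*b^3 - 3/4*b^4) * n
      + (-2 + 18*b - 15*b^2 - 7/4*b^3) * n^2| ≤ (K0 + K1 + K2) * n ^ 2 := by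
    refine (abs_add_three _ _ _).trans ?_
    rw [abs_mul, abs_mul, abs_of_pos hn0, abs_of_pos (by positivity : 0 < n ^ 2)]
    have b1 : n ≤ n ^ 2 := by nlinarith
    have b0 : 1 ≤ n ^ 2 := by nlinarith
    have c0 : |-12 + 36*b + 27/4*b^2 + 15/8*b^3 - 9/4*b^4| ≤ K0 * n ^ 2 :=
      h0.trans (by nlinarith)
    have c1 : |-10 + 66*b - 9*b^2 - 37/8*b^3 - 3/4*b^4| * n ≤ K1 * n ^ 2 := by gcongr
    have c2 : |-2 + 18*b - 15*b^2 - 7/4*b^3| * n ^ 2 ≤ K2 * n ^ 2 := by gcongr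
    linarith
  calc _ ≤ (K0 + K1 + K2) * n ^ 2 * n ^ 4 := by gcongr
    _ = (K0 + K1 + K2) * (1 * n ^ 3 * n * n * n) := by ring
    _ ≤ (K0 + K1 + K2) * (4*n^3*(n+1)*(n+2)*(n+3)) := by
      gcongr <;> linarith

/-- The large-`n` expansion of `M'/M = (1/2)/(n+1) * M(3/2, n+2, b) / M(1/2, n+1, b)`, uniform
for `b` in a bounded interval. -/
lemma kummer_ratio_asymp (L : ℝ) : ∃ K, 0 ≤ K ∧ ∀ b ∈ Set.Icc (-L) L, ∀ n : ℝ, 1 ≤ n →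
    |(1/2) / (n + 1) * (∑' r, kummerTerm (3/2) (n + 2) b r) /
        (∑' r, kummerTerm (1/2) (n + 1) b r)
      - (1/(2*n) + (b - 1)/(2*n^2) + (2*b^2 - 7*b + 2)/(4*n^3))| ≤ K / n ^ 4 := by
  obtain ⟨K0, hK0, h0⟩ := exists_abs_bound (fun b =>
    -12 + 36*b + 27/4*b^2 + 15/8*b^3 - 9/4*b^4) (by fun_prop) L
  obtain ⟨K1, hK1, h1⟩ := exists_abs_bound (fun b =>
    -10 + 66*b - 9*b^2 - 37/8*b^3 - 3/4*b^4) (by fun_prop) L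
  obtain ⟨K2, hK2, h2⟩ := exists_abs_bound (fun b =>
    -2 + 18*b - 15*b^2 - 7/4*b^3) (by fun_prop) L
  obtain ⟨Kp, hKp, hp⟩ := exists_abs_bound (fun b => (b - 1)/2) (by fun_prop) L
  obtain ⟨Kr, hKr, hr⟩ := exists_abs_bound (fun b => (2*b^2 - 7*b + 2)/4) (by fun_prop) L
  obtain ⟨Ke, hKe, he⟩ := exists_abs_bound (fun b => |b| ^ 3 * exp |b|) (by fun_prop) L
  obtain ⟨Kl, hKl, hl⟩ := exists_abs_bound (fun b => exp |b|) (by fun_prop) L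
  refine ⟨Kl * (7 * Ke + (1 + Kp + Kr) * (2 * Ke) + (K0 + K1 + K2)), by positivity,
    fun b hb n hn => ?_⟩
  replace h0 := h0 b hb
  replace h1 := h1 b hb
  replace h2 := h2 b hb
  replace hp := hp b hb
  replace hr := hr b hb
  replace he := he b hb
  replace hl := hl b hb
  simp only [abs_mul, abs_pow, abs_abs, Real.abs_exp] at he hl
  have hn0 : 0 < n := by linarith
  set M3 := ∑' r, kummerTerm (3/2) (n + 2) b r with hM3
  set M1 := ∑' r, kummerTerm (1/2) (n + 1) b r with hM1
  have t3 := kummer_tail (a := 3/2) (c := n + 2) (by norm_num) (by linarith) (by linarith) b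
  have t1 := kummer_tail (a := 1/2) (c := n + 1) (by norm_num) (by linarith) (by linarith) b
  rw [← hM3, mul_assoc] at t3
  rw [← hM1, mul_assoc] at t1
  have l1 : exp (-|b|) ≤ M1 :=
    kummer_lower (a := 1/2) (c := n + 1) (by norm_num) (by linarith) (by linarith) b
  have hM1pos : 0 < M1 := (exp_pos _).trans_le l1
  have hinv : M1⁻¹ ≤ Kl := by
    refine le_trans ?_ hl
    rw [Real.exp_neg] at l1
    exact inv_le_of_inv_le₀ (exp_pos _) l1
  set p := 1/(2*n) + (b - 1)/(2*n^2) + (2*b^2 - 7*b + 2)/(4*n^3) with hpdef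
  set P3 := 1 + 3/2 / (n + 2) * b + 3/2 * (3/2 + 1) / ((n + 2) * (n + 2 + 1)) * b ^ 2 / 2 with hP3
  set P1 := 1 + 1/2 / (n + 1) * b + 1/2 * (1/2 + 1) / ((n + 1) * (n + 1 + 1)) * b ^ 2 / 2 with hP1
  have hpb : |p| ≤ (1 + Kp + Kr) / n := by
    have e : p = (1/2 + (b-1)/2 * (1/n) + (2*b^2 - 7*b + 2)/4 * (1/n)^2) / n := by
      rw [hpdef]; field_simp
    rw [e, abs_div, abs_of_pos hn0]
    gcongr
    have i1 : |1/n| ≤ 1 := by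
      rw [abs_of_pos (by positivity), div_le_one hn0]; exact hn
    refine (abs_add_three _ _ _).trans ?_
    rw [abs_mul, abs_mul, abs_pow]
    have a1 : |(b-1)/2| * |1/n| ≤ Kp * 1 := by gcongr
    have a2 : |(2*b^2 - 7*b + 2)/4| * |1/n|^2 ≤ Kr * 1 := by
      gcongr; exact pow_le_one₀ (abs_nonneg _) i1
    have a3 : |(1/2 : ℝ)| ≤ 1 := by norm_num [abs_le]
    linarith
  have d3 : |M3 - P3| ≤ 14 * Ke / n ^ 3 := by
    refine t3.trans ?_
    rw [show 14 * Ke / n ^ 3 = 14 / n ^ 3 * Ke by ring]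
    refine mul_le_mul ?_ he (by positivity) (by positivity)
    rw [div_le_div_iff₀ (by positivity) (by positivity)]
    have : n * n * n ≤ (n + 2) * (n + 2 + 1) * (n + 2 + 2) := by gcongr <;> linarith
    nlinarith [this]
  have d1 : |M1 - P1| ≤ 2 * Ke / n ^ 3 := by
    refine t1.trans ?_
    rw [show 2 * Ke / n ^ 3 = 2 / n ^ 3 * Ke by ring]
    refine mul_le_mul ?_ he (by positivity) (by positivity)
    rw [div_le_div_iff₀ (by positivity) (by positivity)]
    have : n * n * n ≤ (n + 1) * (n + 1 + 1) * (n + 1 + 2) := by gcongr <;> linarith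
    nlinarith [this]
  have dP : |(1/2) / (n + 1) * P3 - p * P1| ≤ (K0 + K1 + K2) / n ^ 4 := by
    rw [hpdef, hP3, hP1]
    exact kummer_poly_remainder hn hK0 hK1 hK2 h0 h1 h2
  have key : (1/2) / (n + 1) * M3 / M1 - p =
      ((1/2) / (n + 1) * (M3 - P3) - p * (M1 - P1) + ((1/2) / (n + 1) * P3 - p * P1)) * M1⁻¹ := by
    field_simp
    ring
  rw [key, abs_mul, abs_of_pos (inv_pos.2 hM1pos),
    show Kl * (7 * Ke + (1 + Kp + Kr) * (2 * Ke) + (K0 + K1 + K2)) / n ^ 4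
      = ((1/2 / n) * (14 * Ke / n ^ 3) + (1 + Kp + Kr) / n * (2 * Ke / n ^ 3)
        + (K0 + K1 + K2) / n ^ 4) * Kl by field_simp; ring]
  refine mul_le_mul ?_ hinv (inv_pos.2 hM1pos).le (by positivity)
  have s1 : |(1/2) / (n + 1) * (M3 - P3)| ≤ (1/2 / n) * (14 * Ke / n ^ 3) := by
    rw [abs_mul]
    refine mul_le_mul ?_ d3 (abs_nonneg _) (by positivity)
    rw [abs_of_pos (by positivity)]
    gcongr
    linarith
  have s2 : |p * (M1 - P1)| ≤ (1 + Kp + Kr) / n * (2 * Ke / n ^ 3) := by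
    rw [abs_mul]
    exact mul_le_mul hpb d1 (abs_nonneg _) (by positivity)
  refine (abs_add_le _ _).trans (add_le_add ((abs_sub _ _).trans (add_le_add s1 s2)) dP)

/-! ### The polylogarithms `Li_k(e ^ (-t))` for small `t` -/

/-- `Li_k(e ^ (-t)) = ∑_{m ≥ 1} e ^ (-t m) / m ^ k`, indexed by `m = n + 1`. -/
noncomputable def polylogExp (k : ℕ) (t : ℝ) : ℝ :=
  ∑' n : ℕ, exp (-t * ((n : ℝ) + 1)) * (1 / ((n : ℝ) + 1)) ^ k

lemma inv_succ_mem (n : ℕ) : 0 < 1 / ((n : ℝ) + 1) ∧ 1 / ((n : ℝ) + 1) ≤ 1 := by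
  have : (0 : ℝ) ≤ n := Nat.cast_nonneg n
  exact ⟨by positivity, by rw [div_le_one (by positivity)]; linarith⟩

lemma hasSum_exp_geom {t : ℝ} (ht : 0 < t) :
    HasSum (fun n : ℕ => exp (-t * ((n : ℝ) + 1))) (1 / (exp t - 1)) := by
  have h1 : exp (-t) < 1 := by rw [Real.exp_lt_one_iff]; linarith
  have h := (hasSum_geometric_of_lt_one (exp_pos (-t)).le h1).mul_left (exp (-t))
  convert! h using 1
  · funext n
    rw [← Real.exp_nat_mul, ← Real.exp_add]
    congr 1; ring
  · rw [Real.exp_neg]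
    have : 1 < exp t := by rw [Real.one_lt_exp_iff]; exact ht
    have : exp t - 1 ≠ 0 := by linarith
    have := exp_pos t
    field_simp

lemma polylogExp_summable (k : ℕ) {t : ℝ} (ht : 0 < t) :
    Summable (fun n : ℕ => exp (-t * ((n : ℝ) + 1)) * (1 / ((n : ℝ) + 1)) ^ k) := by
  refine Summable.of_nonneg_of_le (fun n => ?_) (fun n => ?_) (hasSum_exp_geom ht).summable
  · have := (inv_succ_mem n).1
    positivity
  · have := inv_succ_mem n
    exact mul_le_of_le_one_right (exp_pos _).le (pow_le_one₀ this.1.le this.2)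

lemma summable_inv_pow {k : ℕ} (hk : 2 ≤ k) : Summable (fun n : ℕ => (1 / ((n : ℝ) + 1)) ^ k) := by
  have h := (summable_nat_add_iff 1).2 (Real.summable_one_div_nat_pow.2 (by omega : 1 < k))
  convert! h using 2 with n
  push_cast
  rw [div_pow, one_pow]

lemma polylogExp_hasDerivAt (k : ℕ) {t : ℝ} (ht : 0 < t) :
    HasDerivAt (polylogExp (k + 1)) (-polylogExp k t) t := by
  have h := hasDerivAt_tsum_of_isPreconnected
    (g := fun (n : ℕ) (s : ℝ) => exp (-s * ((n : ℝ) + 1)) * (1 / ((n : ℝ) + 1)) ^ (k + 1))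
    (g' := fun (n : ℕ) (s : ℝ) => -(exp (-s * ((n : ℝ) + 1)) * (1 / ((n : ℝ) + 1)) ^ k))
    (t := Set.Ioi (t / 2)) (y := t) (y₀ := t)
    (hasSum_exp_geom (half_pos ht)).summable isOpen_Ioi isPreconnected_Ioi ?_ ?_
    (by simpa using ht) (polylogExp_summable (k + 1) ht) (by simpa using ht)
  · rw [tsum_neg] at h
    exact h
  · intro n s _
    have h1 : HasDerivAt (fun s : ℝ => -s * ((n : ℝ) + 1)) (-1 * ((n : ℝ) + 1)) s :=
      ((hasDerivAt_id s).neg).mul_const _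
    have h2 := h1.exp.mul_const ((1 / ((n : ℝ) + 1)) ^ (k + 1))
    convert! h2 using 1
    have : (n : ℝ) + 1 ≠ 0 := by positivity
    rw [pow_succ]
    field_simp
  · intro n s hs
    have hs' : t / 2 < s := hs
    have hm := inv_succ_mem n
    have hn : (0 : ℝ) ≤ n := Nat.cast_nonneg n
    rw [norm_neg, Real.norm_eq_abs, abs_of_nonneg (by have := hm.1; positivity)]
    refine (mul_le_of_le_one_right (exp_pos _).le (pow_le_one₀ hm.1.le hm.2)).trans ?_
    rw [Real.exp_le_exp]
    nlinarith

lemma polylogExp_continuousOn {k : ℕ} (hk : 2 ≤ k) :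
    ContinuousOn (polylogExp k) (Set.Ici 0) := by
  refine continuousOn_tsum (fun n => by fun_prop) (summable_inv_pow hk) (fun n s hs => ?_)
  have hm := (inv_succ_mem n).1
  have hs' : (0 : ℝ) ≤ s := hs
  rw [Real.norm_eq_abs, abs_of_nonneg (by positivity)]
  refine mul_le_of_le_one_left (by positivity) ?_
  rw [Real.exp_le_one_iff]
  have : 0 ≤ s * ((n : ℝ) + 1) := by positivity
  linarith

lemma exp_third_order {t : ℝ} (ht0 : 0 < t) (ht : t ≤ 1) :
    |exp t - 1 - t - t ^ 2 / 2| ≤ t ^ 3 := by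
  have h := Real.exp_bound (x := t) (by rw [abs_of_pos ht0]; exact ht) (n := 3) (by norm_num)
  rw [abs_of_pos ht0] at h
  norm_num [Finset.sum_range_succ, Nat.factorial] at h
  have h3 : 0 < t ^ 3 := by positivity
  rw [show exp t - 1 - t - t ^ 2 / 2 = exp t - (1 + t + t ^ 2 / 2) by ring]
  linarith

/-- Here `Li_0(e ^ (-t)) = 1 / (e ^ t - 1)`. -/
lemma polylogExp_zero {t : ℝ} (ht0 : 0 < t) (ht : t ≤ 1) :
    |polylogExp 0 t - 1 / t + 1 / 2| ≤ 2 * t := by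
  have e : polylogExp 0 t = 1 / (exp t - 1) := by
    unfold polylogExp
    simpa using (hasSum_exp_geom ht0).tsum_eq
  have hr := exp_third_order ht0 ht
  obtain ⟨r, hrdef⟩ : ∃ r, r = exp t - 1 - t - t ^ 2 / 2 := ⟨_, rfl⟩
  rw [← hrdef] at hr
  have hexp : exp t - 1 = t + t ^ 2 / 2 + r := by rw [hrdef]; ring
  have hpos : t ≤ exp t - 1 := by linarith [Real.add_one_le_exp t]
  have hp : 0 < exp t - 1 := by linarith
  have e2 : 1 / (exp t - 1) - 1 / t + 1 / 2
      = (t ^ 3 / 2 + (t - 2) * r) / (2 * t * (exp t - 1)) := by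
    field_simp
    rw [hexp]
    ring
  rw [e, e2, abs_div, abs_of_pos (by positivity : 0 < 2 * t * (exp t - 1)),
    div_le_iff₀ (by positivity)]
  have h1 : |t ^ 3 / 2 + (t - 2) * r| ≤ t ^ 3 / 2 + 2 * t ^ 3 := by
    refine (abs_add_le _ _).trans ?_
    rw [abs_mul, abs_of_pos (by positivity : 0 < t ^ 3 / 2)]
    have : |t - 2| ≤ 2 := by rw [abs_le]; constructor <;> linarith
    have := mul_le_mul this hr (abs_nonneg _) (by norm_num)
    linarith
  have h2 : 2 * t * (2 * t * t) ≤ 2 * t * (2 * t * (exp t - 1)) := by gcongr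
  nlinarith [pow_pos ht0 3]

/-- Here `Li_1(e ^ (-t)) = -log (1 - e ^ (-t))`. -/
lemma polylogExp_one {t : ℝ} (ht0 : 0 < t) (ht : t ≤ 1 / 2) :
    |polylogExp 1 t + log t| ≤ 2 * t := by
  have h1 : exp (-t) < 1 := by rw [Real.exp_lt_one_iff]; linarith
  have e : polylogExp 1 t = -log (1 - exp (-t)) := by
    unfold polylogExp
    rw [← (Real.hasSum_pow_div_log_of_abs_lt_one (x := exp (-t))
      (by rw [abs_of_pos (exp_pos _)]; exact h1)).tsum_eq]
    refine tsum_congr (fun n => ?_)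
    rw [← Real.exp_nat_mul, pow_one, mul_one_div]
    congr 2
    push_cast; ring
  have hb := Real.abs_exp_sub_one_sub_id_le (x := -t) (by rw [abs_neg, abs_of_pos ht0]; linarith)
  rw [abs_le] at hb
  have hle := Real.add_one_le_exp (-t)
  set q := (1 - exp (-t)) / t with hq
  have hq1 : q ≤ 1 := by rw [hq, div_le_one ht0]; linarith
  have hq2 : 1 - t ≤ q := by rw [hq, le_div_iff₀ ht0]; nlinarith
  have hq0 : 0 < q := by linarith
  have e2 : -log (1 - exp (-t)) + log t = -log q := by
    rw [hq, Real.log_div (by linarith) ht0.ne']; ring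
  rw [e, e2, abs_of_nonneg (by have := Real.log_nonpos hq0.le hq1; linarith)]
  have h3 := Real.one_sub_inv_le_log_of_pos hq0
  have h4 : q⁻¹ ≤ 1 + 2 * t := by
    rw [inv_le_iff_one_le_mul₀ hq0]
    nlinarith
  linarith

/-- The mean value theorem on `[0, t]`, for a function vanishing at `0` whose derivative at
`s > 0` is at most `K * s`. -/
lemma abs_le_of_deriv_linear {f f' : ℝ → ℝ} {K t : ℝ} (hK : 0 ≤ K) (ht : 0 < t)
    (hf : ContinuousOn f (Set.Ici 0)) (hf0 : f 0 = 0)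
    (hd : ∀ s, 0 < s → HasDerivAt f (f' s) s) (hb : ∀ s, 0 < s → s < t → |f' s| ≤ K * s) :
    |f t| ≤ K * t ^ 2 := by
  obtain ⟨c, hc, h⟩ := exists_hasDerivAt_eq_slope f f' ht
    (hf.mono (fun s hs => hs.1)) (fun s hs => hd s hs.1)
  rw [hf0, sub_zero, sub_zero, eq_div_iff ht.ne'] at h
  rw [← h, abs_mul, abs_of_pos ht]
  have := hb c hc.1 hc.2
  have h2 : K * c ≤ K * t := by gcongr; exact hc.2.le
  nlinarith

/-- Obtained from `polylogExp_one` by integration. -/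
lemma polylogExp_two {t : ℝ} (ht0 : 0 < t) (ht : t ≤ 1 / 2) :
    |polylogExp 2 t - polylogExp 2 0 + t - t * log t| ≤ 2 * t ^ 2 := by
  refine abs_le_of_deriv_linear
    (f := fun t => polylogExp 2 t - polylogExp 2 0 + t - t * log t)
    (f' := fun s => -(polylogExp 1 s + log s)) (by norm_num) ht0 ?_ (by simp) ?_ ?_
  · exact (((polylogExp_continuousOn le_rfl).sub continuousOn_const).add continuousOn_id).sub
      Real.continuous_mul_log.continuousOn
  · intro s hs
    have h := (((polylogExp_hasDerivAt 1 hs).sub_const (polylogExp 2 0)).add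
      (hasDerivAt_id s)).sub (Real.hasDerivAt_mul_log hs.ne')
    convert! h using 1
    ring
  · intro s hs hst
    rw [abs_neg]
    exact polylogExp_one hs (by linarith)

/-- Obtained from `polylogExp_two` by integration. -/
lemma polylogExp_three {t : ℝ} (ht0 : 0 < t) (ht : t ≤ 1 / 2) :
    |polylogExp 3 t - polylogExp 3 0 + polylogExp 2 0 * t + t ^ 2 / 2 * log t| ≤ 3 * t ^ 2 := by
  refine abs_le_of_deriv_linear
    (f := fun t => polylogExp 3 t - polylogExp 3 0 + polylogExp 2 0 * t + t ^ 2 / 2 * log t)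
    (f' := fun s => -(polylogExp 2 s - polylogExp 2 0 + s - s * log s) + 3 / 2 * s)
    (by norm_num) ht0 ?_ (by simp) ?_ ?_
  · have hc : ContinuousOn (fun t : ℝ => t ^ 2 / 2 * log t) (Set.Ici 0) := by
      have : (fun t : ℝ => t ^ 2 / 2 * log t) = fun t => t / 2 * (t * log t) := by
        funext t; ring
      rw [this]
      exact ((continuous_id.div_const 2).mul Real.continuous_mul_log).continuousOn
    exact (((polylogExp_continuousOn (by norm_num)).sub continuousOn_const).add
      (continuousOn_const.mul continuousOn_id)).add hc
  · intro s hs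
    have h0 : HasDerivAt (fun t : ℝ => t ^ 2 / 2 * log t)
        ((2 * s) / 2 * log s + s ^ 2 / 2 * s⁻¹) s := by
      have := ((hasDerivAt_pow 2 s).div_const 2).mul (Real.hasDerivAt_log hs.ne')
      convert! this using 1; simp
    have h := (((polylogExp_hasDerivAt 2 hs).sub_const (polylogExp 3 0)).add
      ((hasDerivAt_id s).const_mul (polylogExp 2 0))).add h0
    convert! h using 1
    field_simp
    ring
  · intro s hs hst
    have h2 := polylogExp_two hs (by linarith)
    rw [abs_le] at h2 ⊢
    constructor <;> nlinarith [h2.1, h2.2]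

/-! ### Special values -/

lemma polylogExp_at_zero (k : ℕ) :
    polylogExp k 0 = ∑' n : ℕ, (1 / ((n : ℝ) + 1)) ^ k := by
  simp [polylogExp]

lemma tsum_inv_pow_eq {k : ℕ} (hk : k ≠ 0) {v : ℝ}
    (h : HasSum (fun n : ℕ => 1 / (n : ℝ) ^ k) v) : ∑' n : ℕ, (1 / ((n : ℝ) + 1)) ^ k = v := by
  have h2 := (hasSum_nat_add_iff' 1).2 h
  simp only [Finset.sum_range_one, Nat.cast_zero, zero_pow hk, div_zero, sub_zero] at h2
  rw [← h2.tsum_eq]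
  refine tsum_congr (fun n => ?_)
  rw [div_pow, one_pow]
  push_cast
  rfl

lemma tsum_inv_pow_two : ∑' n : ℕ, (1 / ((n : ℝ) + 1)) ^ 2 = π ^ 2 / 6 :=
  tsum_inv_pow_eq two_ne_zero hasSum_zeta_two

lemma tsum_inv_pow_four : ∑' n : ℕ, (1 / ((n : ℝ) + 1)) ^ 4 = π ^ 4 / 90 :=
  tsum_inv_pow_eq four_ne_zero hasSum_zeta_four

lemma bernoulli'_six_eq : bernoulli' 6 = 1 / 42 := by
  have h5 : bernoulli' 5 = 0 := bernoulli'_eq_zero_of_odd (by decide) (by norm_num)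
  rw [bernoulli'_def]
  norm_num [Finset.sum_range_succ, h5, Nat.choose]

lemma tsum_inv_pow_six : ∑' n : ℕ, (1 / ((n : ℝ) + 1)) ^ 6 = π ^ 6 / 945 := by
  refine tsum_inv_pow_eq (by norm_num) ?_
  have h := hasSum_zeta_nat (k := 3) (by norm_num)
  rw [show 2 * 3 = 6 by norm_num, bernoulli_eq_bernoulli'_of_ne_one (by norm_num),
    bernoulli'_six_eq] at h
  convert! h using 1
  norm_num [Nat.factorial]
  ring

/-! ### Expansion of a single pair of eigenvalues -/

/-- With `x = 1 / n`, the value of `μ_n(b) - n`. -/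
noncomputable def alphaPoly (b x : ℝ) : ℝ :=
  -b + b * x + b * (b - 1) * x ^ 2 + b * (2 * b ^ 2 - 7 * b + 2) / 2 * x ^ 3

/-- With `a = λ_n(b) - n`, `a' = λ_n(-b) - n` and `x = 1 / n`, what remains of `a² + a'²` after
its terms of order at most two in `x` have been removed. -/
noncomputable def quadRem (b x a a' : ℝ) : ℝ :=
  a ^ 2 + a' ^ 2 - (2 * b ^ 2 - 4 * b ^ 2 * x + 6 * b ^ 2 * x ^ 2)

/-- Half of the terms of order three to six in `x` of `alphaPoly b x ^ 2 + alphaPoly (-b) x ^ 2`. -/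
noncomputable def zetaPoly (b x : ℝ) : ℝ :=
  (-4 * b ^ 2 - 2 * b ^ 4) * x ^ 3 + (3 * b ^ 2 + 3 * b ^ 4) * x ^ 4
    + (-2 * b ^ 2 - 9 * b ^ 4) * x ^ 5 + (b ^ 2 + 57 / 4 * b ^ 4 + b ^ 6) * x ^ 6

lemma quadRem_eq (b x R R' : ℝ) :
    quadRem b x (alphaPoly b x + R) (alphaPoly (-b) x + R')
      = 2 * zetaPoly b x + R * (2 * alphaPoly b x + R) + R' * (2 * alphaPoly (-b) x + R') := by
  unfold quadRem zetaPoly alphaPoly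
  ring

/-- The odd powers of `b` cancel in `(μ_n(b) - n) + (μ_n(-b) - n)`. -/
lemma alphaPoly_add (b x : ℝ) :
    alphaPoly b x + alphaPoly (-b) x = 2 * b ^ 2 * x ^ 2 - 7 * b ^ 2 * x ^ 3 := by
  unfold alphaPoly
  ring

lemma alphaPoly_abs_le {L b x : ℝ} (hb : |b| ≤ L) (hx0 : 0 < x) (hx1 : x ≤ 1) :
    |alphaPoly b x| ≤ (L ^ 2 + 5 * L + 4) * |b| := by
  have e : alphaPoly b x
      = b * (-1 + x + (b - 1) * x ^ 2 + (b ^ 2 - 7 / 2 * b + 1) * x ^ 3) := by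
    unfold alphaPoly; ring
  have hL : 0 ≤ L := (abs_nonneg b).trans hb
  have h2 : |x ^ 2| ≤ 1 := by rw [abs_of_pos (by positivity)]; exact pow_le_one₀ hx0.le hx1
  have h3 : |x ^ 3| ≤ 1 := by rw [abs_of_pos (by positivity)]; exact pow_le_one₀ hx0.le hx1
  have h4 : |b - 1| ≤ L + 1 := (abs_sub _ _).trans (by simpa using hb)
  have hb2 : |b ^ 2| ≤ L ^ 2 := by rw [abs_pow]; gcongr
  have h5 : |b ^ 2 - 7 / 2 * b + 1| ≤ L ^ 2 + 7 / 2 * L + 1 := by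
    refine (abs_add_le _ _).trans ?_
    have := abs_sub (b ^ 2) (7 / 2 * b)
    rw [abs_mul, abs_of_pos (by norm_num : (0 : ℝ) < 7 / 2)] at this
    rw [abs_one]
    linarith
  rw [e, abs_mul, mul_comm]
  gcongr
  have a1 : |(b - 1) * x ^ 2| ≤ (L + 1) * 1 := by rw [abs_mul]; gcongr
  have a2 : |(b ^ 2 - 7 / 2 * b + 1) * x ^ 3| ≤ (L ^ 2 + 7 / 2 * L + 1) * 1 := by
    rw [abs_mul]; gcongr
  have a3 : |-1 + x| ≤ 1 := by rw [abs_le]; constructor <;> linarith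
  have := abs_add_three (-1 + x) ((b - 1) * x ^ 2) ((b ^ 2 - 7 / 2 * b + 1) * x ^ 3)
  linarith

lemma zetaPoly_abs_le {b x Z : ℝ} (hx0 : 0 < x) (hx1 : x ≤ 1)
    (hz' : 4 * |b| + 2 * |b| ^ 3 + 3 * |b| + 3 * |b| ^ 3
      + 2 * |b| + 9 * |b| ^ 3 + |b| + 57 / 4 * |b| ^ 3 + |b| ^ 5 ≤ Z) :
    |zetaPoly b x| ≤ Z * |b| * x ^ 3 := by
  have hx43 : x ^ 4 ≤ x ^ 3 := pow_le_pow_of_le_one hx0.le hx1 (by norm_num)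
  have hx53 : x ^ 5 ≤ x ^ 3 := pow_le_pow_of_le_one hx0.le hx1 (by norm_num)
  have hx63 : x ^ 6 ≤ x ^ 3 := pow_le_pow_of_le_one hx0.le hx1 (by norm_num)
  have key : ∀ c : ℝ, ∀ y : ℝ, 0 ≤ y → y ≤ x ^ 3 → |c * y| ≤ |c| * x ^ 3 := by
    intro c y hy0 hy
    rw [abs_mul, abs_of_nonneg hy0]; gcongr
  have k3 := key (-4 * b ^ 2 - 2 * b ^ 4) (x ^ 3) (by positivity) le_rfl
  have k4 := key (3 * b ^ 2 + 3 * b ^ 4) (x ^ 4) (by positivity) hx43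
  have k5 := key (-2 * b ^ 2 - 9 * b ^ 4) (x ^ 5) (by positivity) hx53
  have k6 := key (b ^ 2 + 57 / 4 * b ^ 4 + b ^ 6) (x ^ 6) (by positivity) hx63
  have hsq : b ^ 2 = |b| ^ 2 := (sq_abs b).symm
  have hb4 : b ^ 4 = |b| ^ 4 := by rw [show b ^ 4 = (b ^ 2) ^ 2 by ring, hsq]; ring
  have hb6 : b ^ 6 = |b| ^ 6 := by rw [show b ^ 6 = (b ^ 2) ^ 3 by ring, hsq]; ring
  have f3 : |-4 * b ^ 2 - 2 * b ^ 4| = |b| * (4 * |b| + 2 * |b| ^ 3) := by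
    rw [abs_of_nonpos (by nlinarith [sq_nonneg b, sq_nonneg (b ^ 2)]), hsq, hb4]; ring
  have f4 : |3 * b ^ 2 + 3 * b ^ 4| = |b| * (3 * |b| + 3 * |b| ^ 3) := by
    rw [abs_of_nonneg (by positivity), hsq, hb4]; ring
  have f5 : |-2 * b ^ 2 - 9 * b ^ 4| = |b| * (2 * |b| + 9 * |b| ^ 3) := by
    rw [abs_of_nonpos (by nlinarith [sq_nonneg b, sq_nonneg (b ^ 2)]), hsq, hb4]; ring
  have f6 : |b ^ 2 + 57 / 4 * b ^ 4 + b ^ 6| = |b| * (|b| + 57 / 4 * |b| ^ 3 + |b| ^ 5) := by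
    rw [abs_of_nonneg (by positivity), hsq, hb4, hb6]; ring
  unfold zetaPoly
  refine (abs_add_le _ _).trans ?_
  have tri := abs_add_three ((-4 * b ^ 2 - 2 * b ^ 4) * x ^ 3) ((3 * b ^ 2 + 3 * b ^ 4) * x ^ 4)
    ((-2 * b ^ 2 - 9 * b ^ 4) * x ^ 5)
  have fin := mul_le_mul_of_nonneg_right hz' (by positivity : 0 ≤ |b| * x ^ 3)
  rw [f3] at k3; rw [f4] at k4; rw [f5] at k5; rw [f6] at k6
  linarith

set_option maxHeartbeats 1000000 in
/-- Uniform bounds on `a = λ_n(b) - n`, `a' = λ_n(-b) - n`; the constant depends only on `L, K`. -/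
lemma pair_bounds (L K : ℝ) (hL : 0 ≤ L) (hK : 0 ≤ K) : ∃ A, 0 ≤ A ∧
    ∀ b x R R' : ℝ, |b| ≤ L → 0 < x → x ≤ 1 → |R| ≤ K * |b| * x ^ 4 → |R'| ≤ K * |b| * x ^ 4 →
      |alphaPoly b x + R| ≤ A * |b| ∧ |alphaPoly (-b) x + R'| ≤ A * |b| ∧
      |(alphaPoly b x + R) + (alphaPoly (-b) x + R')| ≤ A * |b| * x ^ 2 ∧
      |quadRem b x (alphaPoly b x + R) (alphaPoly (-b) x + R')| ≤ A * |b| * x ^ 3 ∧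
      |R * (2 * alphaPoly b x + R)| ≤ A * |b| * x ^ 3 := by
  set B := L ^ 2 + 5 * L + 4 + K with hB
  obtain ⟨Z, hZ, hz⟩ := exists_abs_bound (fun b => 4 * |b| + 2 * |b| ^ 3 + 3 * |b| + 3 * |b| ^ 3
    + 2 * |b| + 9 * |b| ^ 3 + |b| + 57 / 4 * |b| ^ 3 + |b| ^ 5) (by fun_prop) L
  refine ⟨B + (9 * L + 2 * K) + (2 * Z + 4 * (K * (B * L))), by positivity, ?_⟩
  intro b x R R' hb hx0 hx1 hR hR'
  have hB0 : 0 ≤ B := by positivity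
  have hx4 : x ^ 4 ≤ 1 := pow_le_one₀ hx0.le hx1
  have hx42 : x ^ 4 ≤ x ^ 2 := pow_le_pow_of_le_one hx0.le hx1 (by norm_num)
  have hx32 : x ^ 3 ≤ x ^ 2 := pow_le_pow_of_le_one hx0.le hx1 (by norm_num)
  have hx43 : x ^ 4 ≤ x ^ 3 := pow_le_pow_of_le_one hx0.le hx1 (by norm_num)
  have hb0 := abs_nonneg b
  have ha := alphaPoly_abs_le hb hx0 hx1
  have ha' := alphaPoly_abs_le (L := L) (b := -b) (by rwa [abs_neg]) hx0 hx1
  rw [abs_neg] at ha'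
  have hR1 : |R| ≤ K * |b| := hR.trans (mul_le_of_le_one_right (by positivity) hx4)
  have hR1' : |R'| ≤ K * |b| := hR'.trans (mul_le_of_le_one_right (by positivity) hx4)
  have s1 : |alphaPoly b x + R| ≤ B * |b| := by
    refine (abs_add_le _ _).trans ?_
    rw [hB, add_mul _ K]; linarith
  have s1' : |alphaPoly (-b) x + R'| ≤ B * |b| := by
    refine (abs_add_le _ _).trans ?_
    rw [hB, add_mul _ K]; linarith
  have aB : |alphaPoly b x| ≤ B * |b| := ha.trans (by gcongr; linarith)
  have aB' : |alphaPoly (-b) x| ≤ B * |b| := ha'.trans (by gcongr; linarith)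
  have cross : ∀ r al : ℝ, |r| ≤ K * |b| * x ^ 4 → |al| ≤ B * |b| → |al + r| ≤ B * |b| →
      |r * (2 * al + r)| ≤ 2 * (K * (B * L)) * |b| * x ^ 3 := by
    intro r al hr hal halr
    have h2 : |2 * al + r| ≤ 2 * (B * L) := by
      have e : 2 * al + r = al + (al + r) := by ring
      rw [e]
      refine (abs_add_le _ _).trans ?_
      have : B * |b| ≤ B * L := by gcongr
      linarith
    rw [abs_mul]
    calc |r| * |2 * al + r| ≤ (K * |b| * x ^ 4) * (2 * (B * L)) := by gcongr
      _ ≤ (K * |b| * x ^ 3) * (2 * (B * L)) := by gcongr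
      _ = _ := by ring
  have c1 := cross R _ hR aB s1
  have c1' := cross R' _ hR' aB' s1'
  have hsum : |(alphaPoly b x + R) + (alphaPoly (-b) x + R')| ≤ (9 * L + 2 * K) * |b| * x ^ 2 := by
    have e : (alphaPoly b x + R) + (alphaPoly (-b) x + R')
        = b ^ 2 * (2 * x ^ 2 - 7 * x ^ 3) + R + R' := by
      have := alphaPoly_add b x
      linear_combination this
    rw [e]
    refine (abs_add_three _ _ _).trans ?_
    have i1 : |b ^ 2 * (2 * x ^ 2 - 7 * x ^ 3)| ≤ 9 * L * |b| * x ^ 2 := by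
      rw [abs_mul, abs_pow]
      have : |2 * x ^ 2 - 7 * x ^ 3| ≤ 9 * x ^ 2 := by
        have := pow_pos hx0 2
        have := pow_pos hx0 3
        rw [abs_le]; constructor <;> linarith
      calc |b| ^ 2 * |2 * x ^ 2 - 7 * x ^ 3| ≤ |b| ^ 2 * (9 * x ^ 2) := by gcongr
        _ = |b| * (|b| * (9 * x ^ 2)) := by ring
        _ ≤ L * (|b| * (9 * x ^ 2)) := by gcongr
        _ = _ := by ring
    have i2 : K * |b| * x ^ 4 ≤ K * |b| * x ^ 2 := by gcongr
    nlinarith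
  have hzeta : |zetaPoly b x| ≤ Z * |b| * x ^ 3 :=
    zetaPoly_abs_le hx0 hx1 ((le_abs_self _).trans (hz b (abs_le.1 hb)))
  have hQ : |quadRem b x (alphaPoly b x + R) (alphaPoly (-b) x + R')|
      ≤ (2 * Z + 4 * (K * (B * L))) * |b| * x ^ 3 := by
    rw [quadRem_eq]
    refine (abs_add_three _ _ _).trans ?_
    rw [abs_mul, abs_of_pos (by norm_num : (0 : ℝ) < 2)]
    linarith
  have hx2 := pow_pos hx0 2
  have hx3 := pow_pos hx0 3
  have hKBL : 0 ≤ K * (B * L) := by positivity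
  refine ⟨s1.trans ?_, s1'.trans ?_, hsum.trans ?_, hQ.trans ?_, c1.trans ?_⟩
  · gcongr ?_ * _; linarith
  · gcongr ?_ * _; linarith
  · gcongr ?_ * _ * _; linarith
  · gcongr ?_ * _ * _; linarith
  · gcongr ?_ * _ * _; linarith

lemma exp_fourth_order (y : ℝ) :
    |exp y - (1 + y + y ^ 2 / 2 + y ^ 3 / 6)| ≤ |y| ^ 4 * exp |y| := by
  have h := Complex.norm_exp_sub_sum_le_norm_mul_exp (y : ℂ) 4
  have e : Complex.exp (y : ℂ) - ∑ m ∈ Finset.range 4, (y : ℂ) ^ m / (m.factorial : ℂ)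
      = ((exp y - (1 + y + y ^ 2 / 2 + y ^ 3 / 6) : ℝ) : ℂ) := by
    push_cast
    norm_num [Finset.sum_range_succ, Nat.factorial]
  rw [e, Complex.norm_real, Complex.norm_real] at h
  exact h

lemma exp_neg_second_order {u : ℝ} (hu : 0 ≤ u) : |exp (-u) - 1 + u| ≤ u ^ 2 := by
  have h1 := Real.add_one_le_exp (-u)
  have h2 : exp (-u) ≤ 1 - u + u ^ 2 := by
    rw [Real.exp_neg, inv_le_iff_one_le_mul₀ (exp_pos u)]
    have := Real.add_one_le_exp u
    have h3 : 0 ≤ 1 - u + u ^ 2 := by nlinarith [sq_nonneg (u - 1), sq_nonneg u]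
    nlinarith [mul_le_mul_of_nonneg_left this h3, pow_nonneg hu 3]
  rw [abs_le]; constructor <;> nlinarith [sq_nonneg u]

/-- The part of `e^{-tλ_n(b)} + e^{-tλ_n(-b)} - 2 e^{-tn}` that contributes to the expansion
below order `t³`, where `x = 1/m` and `m = n`. -/
noncomputable def mainTerm (b t m x R R' : ℝ) : ℝ :=
  exp (-t * m) * (-t * (2 * b ^ 2 * x ^ 2 - 7 * b ^ 2 * x ^ 3)
      + t ^ 2 / 2 * (2 * b ^ 2 - 4 * b ^ 2 * x + 6 * b ^ 2 * x ^ 2))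
    - t * (R + R') + t ^ 2 * (m * (R + R'))
    + t ^ 2 / 2 * quadRem b x (alphaPoly b x + R) (alphaPoly (-b) x + R')

set_option maxHeartbeats 1000000 in
/-- Beyond `mainTerm` there are the quartic Taylor remainder of `e^{-ta}`, the cubic terms (whose
leading parts cancel between `b` and `-b`), and the errors made by replacing `e^{-tm}` with its
Taylor polynomial in front of the rapidly decaying coefficients. -/
lemma pair_expansion (L K : ℝ) (hL : 0 ≤ L) (hK : 0 ≤ K) : ∃ C, 0 ≤ C ∧
    ∀ b t m x R R' : ℝ, |b| ≤ L → 0 < t → t < 1 / 2 → 1 ≤ m → x = 1 / m →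
      |R| ≤ K * |b| * x ^ 4 → |R'| ≤ K * |b| * x ^ 4 →
      |exp (-t * (m + (alphaPoly b x + R))) + exp (-t * (m + (alphaPoly (-b) x + R')))
          - 2 * exp (-t * m) - mainTerm b t m x R R'|
        ≤ C * |b| * (t ^ 4 * exp (-t * m) + t ^ 3 * x ^ 2) := by
  obtain ⟨A, hA, hbd⟩ := pair_bounds L K hL hK
  refine ⟨2 * (A ^ 4 * L ^ 3 * exp (A * L)) + (A ^ 3 * L ^ 2 / 2 + 2 * K + A / 2),
    by positivity, ?_⟩
  intro b t m x R R' hb ht0 ht hm hx hR hR'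
  have hm0 : 0 < m := by linarith
  have hx0 : 0 < x := by rw [hx]; positivity
  have hx1 : x ≤ 1 := by rw [hx, div_le_one hm0]; exact hm
  have hxm : x * m = 1 := by rw [hx]; field_simp
  obtain ⟨h1, h1', h2, h3, -⟩ := hbd b x R R' hb hx0 hx1 hR hR'
  unfold mainTerm
  have hadd : alphaPoly b x + alphaPoly (-b) x = 2 * b ^ 2 * x ^ 2 - 7 * b ^ 2 * x ^ 3 :=
    alphaPoly_add b x
  set a := alphaPoly b x + R with ha
  set a' := alphaPoly (-b) x + R' with ha'
  set Q := quadRem b x a a' with hQ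
  have hb0 := abs_nonneg b
  have hE0 := exp_pos (-t * m)
  have hE1 : exp (-t * m) ≤ 1 := by rw [Real.exp_le_one_iff]; nlinarith
  set e := exp (-t * m) with he
  have rho : ∀ y : ℝ, |y| ≤ A * |b| →
      |exp (-t * y) - (1 - t * y + t ^ 2 / 2 * y ^ 2 - t ^ 3 / 6 * y ^ 3)|
        ≤ A ^ 4 * L ^ 3 * exp (A * L) * |b| * t ^ 4 := by
    intro y hy
    have h := exp_fourth_order (-t * y)
    have e1 : (1 - t * y + t ^ 2 / 2 * y ^ 2 - t ^ 3 / 6 * y ^ 3)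
        = 1 + -t * y + (-t * y) ^ 2 / 2 + (-t * y) ^ 3 / 6 := by ring
    rw [e1]
    refine h.trans ?_
    have hty : |-t * y| ≤ t * (A * |b|) := by
      rw [abs_mul, abs_neg, abs_of_pos ht0]; gcongr
    have hty2 : |-t * y| ≤ A * L := by
      refine hty.trans ?_
      have : A * |b| ≤ A * L := by gcongr
      have : 0 ≤ A * |b| := by positivity
      nlinarith
    calc |-t * y| ^ 4 * exp |-t * y| ≤ (t * (A * |b|)) ^ 4 * exp (A * L) := by gcongr
      _ = A ^ 4 * exp (A * L) * t ^ 4 * |b| * |b| ^ 3 := by ring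
      _ ≤ A ^ 4 * exp (A * L) * t ^ 4 * |b| * L ^ 3 := by gcongr
      _ = _ := by ring
  have r1 := rho a h1
  have r1' := rho a' h1'
  set ρ := exp (-t * a) - (1 - t * a + t ^ 2 / 2 * a ^ 2 - t ^ 3 / 6 * a ^ 3) with hρ
  set ρ' := exp (-t * a') - (1 - t * a' + t ^ 2 / 2 * a' ^ 2 - t ^ 3 / 6 * a' ^ 3) with hρ'
  have ex : exp (-t * (m + a)) = e * exp (-t * a) := by rw [he, ← Real.exp_add]; congr 1; ring
  have ex' : exp (-t * (m + a')) = e * exp (-t * a') := by rw [he, ← Real.exp_add]; congr 1; ring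
  have decomp : exp (-t * (m + a)) + exp (-t * (m + a')) - 2 * e -
      (e * (-t * (2 * b ^ 2 * x ^ 2 - 7 * b ^ 2 * x ^ 3)
        + t ^ 2 / 2 * (2 * b ^ 2 - 4 * b ^ 2 * x + 6 * b ^ 2 * x ^ 2))
        - t * (R + R') + t ^ 2 * (m * (R + R')) + t ^ 2 / 2 * Q)
      = (e * (ρ + ρ') - e * (t ^ 3 / 6 * (a ^ 3 + a' ^ 3)))
        + (t ^ 2 / 2 * (Q * (e - 1)) - t * ((R + R') * (e - 1 + t * m))) := by
    have hQ' : a ^ 2 + a' ^ 2 = 2 * b ^ 2 - 4 * b ^ 2 * x + 6 * b ^ 2 * x ^ 2 + Q := by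
      rw [hQ]; unfold quadRem; ring
    have hS : a + a' = 2 * b ^ 2 * x ^ 2 - 7 * b ^ 2 * x ^ 3 + (R + R') := by
      rw [ha, ha']; linear_combination hadd
    rw [ex, ex', hρ, hρ']
    linear_combination (e * t ^ 2 / 2) * hQ' - (e * t) * hS
  rw [decomp]
  have p1 : |e * (ρ + ρ')| ≤ 2 * (A ^ 4 * L ^ 3 * exp (A * L)) * |b| * (t ^ 4 * e) := by
    rw [abs_mul, abs_of_pos hE0]
    have := abs_add_le ρ ρ'
    calc e * |ρ + ρ'| ≤ e * (2 * (A ^ 4 * L ^ 3 * exp (A * L) * |b| * t ^ 4)) := by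
          gcongr; linarith
      _ = _ := by ring
  have p2 : |e * (t ^ 3 / 6 * (a ^ 3 + a' ^ 3))| ≤ A ^ 3 * L ^ 2 / 2 * |b| * (t ^ 3 * x ^ 2) := by
    have f : a ^ 3 + a' ^ 3 = (a + a') * (a ^ 2 - a * a' + a' ^ 2) := by ring
    have g : |a ^ 2 - a * a' + a' ^ 2| ≤ 3 * (A * L) ^ 2 := by
      have k1 : |a| ≤ A * L := h1.trans (by gcongr)
      have k2 : |a'| ≤ A * L := h1'.trans (by gcongr)
      have := abs_add_le (a ^ 2 - a * a') (a' ^ 2)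
      have := abs_sub (a ^ 2) (a * a')
      have j1 : |a ^ 2| ≤ (A * L) ^ 2 := by rw [abs_pow]; gcongr
      have j2 : |a' ^ 2| ≤ (A * L) ^ 2 := by rw [abs_pow]; gcongr
      have j3 : |a * a'| ≤ (A * L) ^ 2 := by rw [abs_mul, sq]; gcongr
      linarith
    rw [f, abs_mul, abs_of_pos hE0, abs_mul, abs_of_pos (by positivity : 0 < t ^ 3 / 6), abs_mul]
    calc e * (t ^ 3 / 6 * (|a + a'| * |a ^ 2 - a * a' + a' ^ 2|))
        ≤ 1 * (t ^ 3 / 6 * ((A * |b| * x ^ 2) * (3 * (A * L) ^ 2))) := by gcongr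
      _ = _ := by ring
  have p3 : |t ^ 2 / 2 * (Q * (e - 1))| ≤ A / 2 * |b| * (t ^ 3 * x ^ 2) := by
    have g : |e - 1| ≤ t * m := by
      have := Real.add_one_le_exp (-t * m)
      rw [abs_le]; constructor <;> nlinarith
    rw [abs_mul, abs_of_pos (by positivity : 0 < t ^ 2 / 2), abs_mul]
    calc t ^ 2 / 2 * (|Q| * |e - 1|) ≤ t ^ 2 / 2 * ((A * |b| * x ^ 3) * (t * m)) := by gcongr
      _ = A / 2 * |b| * (t ^ 3 * x ^ 2) * (x * m) := by ring
      _ = _ := by rw [hxm, mul_one]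
  have p4 : |t * ((R + R') * (e - 1 + t * m))| ≤ 2 * K * |b| * (t ^ 3 * x ^ 2) := by
    have g : |e - 1 + t * m| ≤ (t * m) ^ 2 := by
      have := exp_neg_second_order (u := t * m) (by positivity)
      rwa [← neg_mul] at this
    have s : |R + R'| ≤ 2 * (K * |b| * x ^ 4) := (abs_add_le _ _).trans (by linarith)
    rw [abs_mul, abs_of_pos ht0, abs_mul]
    calc t * (|R + R'| * |e - 1 + t * m|) ≤ t * (2 * (K * |b| * x ^ 4) * (t * m) ^ 2) := by gcongr
      _ = 2 * K * |b| * (t ^ 3 * x ^ 2) * (x * m) ^ 2 := by ring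
      _ = _ := by rw [hxm]; ring
  have q1 := abs_sub (e * (ρ + ρ')) (e * (t ^ 3 / 6 * (a ^ 3 + a' ^ 3)))
  have q2 := abs_sub (t ^ 2 / 2 * (Q * (e - 1))) (t * ((R + R') * (e - 1 + t * m)))
  refine (abs_add_le _ _).trans ?_
  have w1 : 0 ≤ (A ^ 3 * L ^ 2 / 2 + 2 * K + A / 2) * |b| * (t ^ 4 * e) := by positivity
  have w2 : 0 ≤ 2 * (A ^ 4 * L ^ 3 * exp (A * L)) * |b| * (t ^ 3 * x ^ 2) := by positivity
  linarith

/-! ### Summation over all pairs of eigenvalues -/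

/-- The expansions of `Li_0, …, Li_3` inserted in the leading part of the summed pairs; the terms
`t² log t` cancel and `t³ log t` survives. -/
lemma polylog_combination {b t : ℝ} (ht0 : 0 < t) (ht : t < 1 / 2) :
    |-t * (2 * b ^ 2 * polylogExp 2 t - 7 * b ^ 2 * polylogExp 3 t)
        + t ^ 2 / 2 * (2 * b ^ 2 * polylogExp 0 t - 4 * b ^ 2 * polylogExp 1 t
          + 6 * b ^ 2 * polylogExp 2 t)
        - (t * (b ^ 2 - 2 * b ^ 2 * polylogExp 2 0 + 7 * b ^ 2 * polylogExp 3 0)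
          + t ^ 2 * (3 / 2 * b ^ 2 - 4 * polylogExp 2 0 * b ^ 2) - b ^ 2 / 2 * t ^ 3 * log t)|
      ≤ 37 * b ^ 2 * t ^ 3 := by
  have h0 := abs_le.mp (polylogExp_zero ht0 (by linarith))
  have h1 := abs_le.mp (polylogExp_one ht0 ht.le)
  have h2 := abs_le.mp (polylogExp_two ht0 ht.le)
  have h3 := abs_le.mp (polylogExp_three ht0 ht.le)
  set w0 := polylogExp 0 t - 1 / t + 1 / 2 with hw0
  set w1 := polylogExp 1 t + log t with hw1
  set w2 := polylogExp 2 t - polylogExp 2 0 + t - t * log t with hw2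
  set w3 := polylogExp 3 t - polylogExp 3 0 + polylogExp 2 0 * t + t ^ 2 / 2 * log t with hw3
  have e : -t * (2 * b ^ 2 * polylogExp 2 t - 7 * b ^ 2 * polylogExp 3 t)
        + t ^ 2 / 2 * (2 * b ^ 2 * polylogExp 0 t - 4 * b ^ 2 * polylogExp 1 t
          + 6 * b ^ 2 * polylogExp 2 t)
        - (t * (b ^ 2 - 2 * b ^ 2 * polylogExp 2 0 + 7 * b ^ 2 * polylogExp 3 0)
          + t ^ 2 * (3 / 2 * b ^ 2 - 4 * polylogExp 2 0 * b ^ 2) - b ^ 2 / 2 * t ^ 3 * log t)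
      = b ^ 2 * (t ^ 2 * w0 - 2 * t ^ 2 * w1 - 2 * t * w2 + 3 * t ^ 2 * (w2 - t)
          + 7 * t * w3) := by
    rw [hw0, hw1, hw2, hw3]
    field_simp
    ring
  have ht2 : 0 ≤ t ^ 2 := by positivity
  have ht3 : 0 ≤ t ^ 3 := by positivity
  have b0l := mul_le_mul_of_nonneg_left h0.1 ht2
  have b0r := mul_le_mul_of_nonneg_left h0.2 ht2
  have b1l := mul_le_mul_of_nonneg_left h1.1 ht2
  have b1r := mul_le_mul_of_nonneg_left h1.2 ht2
  have b2l := mul_le_mul_of_nonneg_left h2.1 ht0.le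
  have b2r := mul_le_mul_of_nonneg_left h2.2 ht0.le
  have b3l := mul_le_mul_of_nonneg_left h3.1 ht0.le
  have b3r := mul_le_mul_of_nonneg_left h3.2 ht0.le
  have c2l := mul_le_mul_of_nonneg_left h2.1 ht2
  have c2r := mul_le_mul_of_nonneg_left h2.2 ht2
  have t4 : t ^ 4 ≤ t ^ 3 / 2 := by nlinarith
  rw [e, abs_mul, abs_of_nonneg (sq_nonneg b), show 37 * b ^ 2 * t ^ 3 = b ^ 2 * (37 * t ^ 3) by ring]
  refine mul_le_mul_of_nonneg_left ?_ (sq_nonneg b)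
  rw [abs_le]
  constructor <;> nlinarith

/-- The summed form of `pair_expansion`. The leading parts of `mainTerm` sum to exponentially
damped polylogarithms, and the remaining parts to the constants multiplying `t` and `t²`. -/
lemma pair_trace (L K : ℝ) (hL : 0 ≤ L) (hK : 0 ≤ K) : ∃ C, 0 ≤ C ∧
    ∀ b : ℝ, |b| ≤ L → ∀ R R' : ℕ → ℝ,
      (∀ n : ℕ, |R n| ≤ K * |b| * (1 / ((n : ℝ) + 1)) ^ 4) →
      (∀ n : ℕ, |R' n| ≤ K * |b| * (1 / ((n : ℝ) + 1)) ^ 4) →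
      ∀ t : ℝ, 0 < t → t < 1 / 2 →
      |(∑' n : ℕ, exp (-t * (((n : ℝ) + 1) + (alphaPoly b (1 / ((n : ℝ) + 1)) + R n))))
          + (∑' n : ℕ, exp (-t * (((n : ℝ) + 1) + (alphaPoly (-b) (1 / ((n : ℝ) + 1)) + R' n))))
          - 2 * (1 / (exp t - 1))
          - t * (b ^ 2 - 2 * b ^ 2 * polylogExp 2 0 + 7 * b ^ 2 * polylogExp 3 0
            - (∑' n, R n) - (∑' n, R' n))
          - t ^ 2 * (3 / 2 * b ^ 2 - 4 * polylogExp 2 0 * b ^ 2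
            + (∑' n : ℕ, zetaPoly b (1 / ((n : ℝ) + 1)))
            + 1 / 2 * (∑' n : ℕ, ((((n : ℝ) + 1) + (alphaPoly b (1 / ((n : ℝ) + 1)) + R n)) ^ 2
                - (((n : ℝ) + 1) + alphaPoly b (1 / ((n : ℝ) + 1))) ^ 2))
            + 1 / 2 * (∑' n : ℕ, ((((n : ℝ) + 1) + (alphaPoly (-b) (1 / ((n : ℝ) + 1)) + R' n)) ^ 2
                - (((n : ℝ) + 1) + alphaPoly (-b) (1 / ((n : ℝ) + 1))) ^ 2)))
          + b ^ 2 / 2 * t ^ 3 * log t| ≤ C * |b| * t ^ 3 := by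
  obtain ⟨A, hA, hbd⟩ := pair_bounds L K hL hK
  obtain ⟨C, hC, hexp⟩ := pair_expansion L K hL hK
  have hZ : 0 ≤ ∑' n : ℕ, (1 / ((n : ℝ) + 1)) ^ 2 := tsum_nonneg fun n => by positivity
  refine ⟨C * (1 + ∑' n : ℕ, (1 / ((n : ℝ) + 1)) ^ 2) + 37 * L, by positivity, ?_⟩
  intro b hb R R' hR hR' t ht0 ht
  have hx0 : ∀ n : ℕ, 0 < 1 / ((n : ℝ) + 1) := fun n => (inv_succ_mem n).1
  have hx1 : ∀ n : ℕ, 1 / ((n : ℝ) + 1) ≤ 1 := fun n => (inv_succ_mem n).2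
  have hmx : ∀ n : ℕ, ((n : ℝ) + 1) * (1 / ((n : ℝ) + 1)) = 1 := fun n => by field_simp
  have hb' : |-b| ≤ L := by rwa [abs_neg]
  have hb0 := abs_nonneg b
  have hexpS : ∀ a : ℕ → ℝ, (∀ n, |a n| ≤ A * |b|) →
      Summable fun n : ℕ => exp (-t * (((n : ℝ) + 1) + a n)) := by
    intro a ha
    refine Summable.of_nonneg_of_le (fun n => (exp_pos _).le) (fun n => ?_)
      ((hasSum_exp_geom ht0).summable.mul_left (exp (t * (A * |b|))))
    rw [← exp_add]
    apply exp_le_exp.mpr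
    have := mul_le_mul_of_nonneg_left (abs_le.mp (ha n)).1 ht0.le
    linarith
  have s1 := hexpS _ fun n => (hbd b _ (R n) (R' n) hb (hx0 n) (hx1 n) (hR n) (hR' n)).1
  have s2 := hexpS _ fun n => (hbd b _ (R n) (R' n) hb (hx0 n) (hx1 n) (hR n) (hR' n)).2.1
  have hdom : ∀ (f : ℕ → ℝ) (c : ℝ) (k : ℕ), 2 ≤ k →
      (∀ n : ℕ, |f n| ≤ c * (1 / ((n : ℝ) + 1)) ^ k) → Summable f := fun f c k hk hf =>
    Summable.of_norm_bounded ((summable_inv_pow hk).mul_left c) hf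
  have sR : Summable R := hdom R _ 4 (by norm_num) hR
  have sR' : Summable R' := hdom R' _ 4 (by norm_num) hR'
  have hmul : ∀ S : ℕ → ℝ, (∀ n : ℕ, |S n| ≤ K * |b| * (1 / ((n : ℝ) + 1)) ^ 4) →
      Summable fun n : ℕ => ((n : ℝ) + 1) * S n := by
    intro S hS
    refine hdom _ (K * |b|) 3 (by norm_num) fun n => ?_
    have hm : 0 < (n : ℝ) + 1 := by positivity
    rw [abs_mul, abs_of_pos hm]
    calc ((n : ℝ) + 1) * |S n| ≤ ((n : ℝ) + 1) * (K * |b| * (1 / ((n : ℝ) + 1)) ^ 4) := by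
          gcongr; exact hS n
      _ = K * |b| * (1 / ((n : ℝ) + 1)) ^ 3 * (((n : ℝ) + 1) * (1 / ((n : ℝ) + 1))) := by ring
      _ = _ := by rw [hmx n, mul_one]
  have sQ : Summable fun n : ℕ => R n * (2 * alphaPoly b (1 / ((n : ℝ) + 1)) + R n) :=
    hdom _ (A * |b|) 3 (by norm_num) fun n =>
      (hbd b _ (R n) (R' n) hb (hx0 n) (hx1 n) (hR n) (hR' n)).2.2.2.2
  have sQ' : Summable fun n : ℕ => R' n * (2 * alphaPoly (-b) (1 / ((n : ℝ) + 1)) + R' n) :=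
    hdom _ (A * |-b|) 3 (by norm_num) fun n =>
      (hbd (-b) _ (R' n) (R n) hb' (hx0 n) (hx1 n) (by rw [abs_neg]; exact hR' n)
        (by rw [abs_neg]; exact hR n)).2.2.2.2
  have sd : Summable fun n : ℕ => (((n : ℝ) + 1) + (alphaPoly b (1 / ((n : ℝ) + 1)) + R n)) ^ 2
      - (((n : ℝ) + 1) + alphaPoly b (1 / ((n : ℝ) + 1))) ^ 2 :=
    (((hmul R hR).mul_left 2).add sQ).congr fun n => by ring
  have sd' : Summable fun n : ℕ =>
      (((n : ℝ) + 1) + (alphaPoly (-b) (1 / ((n : ℝ) + 1)) + R' n)) ^ 2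
      - (((n : ℝ) + 1) + alphaPoly (-b) (1 / ((n : ℝ) + 1))) ^ 2 :=
    (((hmul R' hR').mul_left 2).add sQ').congr fun n => by ring
  have sz : Summable fun n : ℕ => zetaPoly b (1 / ((n : ℝ) + 1)) :=
    (((((summable_inv_pow (k := 3) (by norm_num)).mul_left _).add
      ((summable_inv_pow (k := 4) (by norm_num)).mul_left _)).add
      ((summable_inv_pow (k := 5) (by norm_num)).mul_left _)).add
      ((summable_inv_pow (k := 6) (by norm_num)).mul_left _))
  have P := fun k => (polylogExp_summable k ht0).hasSum
  have hmain : HasSum (fun n : ℕ => mainTerm b t ((n : ℝ) + 1) (1 / ((n : ℝ) + 1)) (R n) (R' n))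
      ((-t * (2 * b ^ 2 * polylogExp 2 t - 7 * b ^ 2 * polylogExp 3 t)
        + t ^ 2 / 2 * (2 * b ^ 2 * polylogExp 0 t - 4 * b ^ 2 * polylogExp 1 t
          + 6 * b ^ 2 * polylogExp 2 t))
        - t * ((∑' n, R n) + (∑' n, R' n))
        + t ^ 2 * ((∑' n : ℕ, zetaPoly b (1 / ((n : ℝ) + 1)))
            + 1 / 2 * (∑' n : ℕ, ((((n : ℝ) + 1) + (alphaPoly b (1 / ((n : ℝ) + 1)) + R n)) ^ 2
                - (((n : ℝ) + 1) + alphaPoly b (1 / ((n : ℝ) + 1))) ^ 2))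
            + 1 / 2 * (∑' n : ℕ, ((((n : ℝ) + 1) + (alphaPoly (-b) (1 / ((n : ℝ) + 1)) + R' n)) ^ 2
                - (((n : ℝ) + 1) + alphaPoly (-b) (1 / ((n : ℝ) + 1))) ^ 2)))) := by
    have h1 := (((((P 2).mul_left (2 * b ^ 2)).sub ((P 3).mul_left (7 * b ^ 2))).mul_left (-t)).add
      (((((P 0).mul_left (2 * b ^ 2)).sub ((P 1).mul_left (4 * b ^ 2))).add
        ((P 2).mul_left (6 * b ^ 2))).mul_left (t ^ 2 / 2)))
    have h2 := (sR.hasSum.add sR'.hasSum).mul_left t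
    have h3 := ((sz.hasSum.add (sd.hasSum.mul_left (1 / 2))).add
      (sd'.hasSum.mul_left (1 / 2))).mul_left (t ^ 2)
    refine ((h1.sub h2).add h3).congr_fun ?_
    intro n
    unfold mainTerm
    rw [quadRem_eq]
    ring
  have hgeom := hasSum_exp_geom ht0
  have hD := ((s1.hasSum.add s2.hasSum).sub (hgeom.mul_left 2)).sub hmain
  have herr := ((hgeom.mul_left (t ^ 4)).add
    ((summable_inv_pow (k := 2) le_rfl).hasSum.mul_left (t ^ 3))).mul_left (C * |b|)
  have hle := hD.norm_le_of_bounded herr (fun n => hexp b t ((n : ℝ) + 1) (1 / ((n : ℝ) + 1)) (R n)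
    (R' n) hb ht0 ht (by linarith [Nat.cast_nonneg (α := ℝ) n]) rfl (hR n) (hR' n))
  rw [Real.norm_eq_abs] at hle
  have hg : t ^ 4 * (1 / (exp t - 1)) ≤ t ^ 3 := by
    have := add_one_le_exp t
    rw [mul_one_div, div_le_iff₀ (by linarith), show t ^ 4 = t ^ 3 * t by ring]
    gcongr
    linarith
  have hpoly := polylog_combination (b := b) ht0 ht
  have hbb : 37 * b ^ 2 * t ^ 3 ≤ 37 * L * |b| * t ^ 3 := by
    rw [← sq_abs b]
    have : |b| ^ 2 ≤ L * |b| := by rw [sq]; gcongr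
    have h3 : 0 ≤ t ^ 3 := by positivity
    nlinarith
  have hfin : C * |b| * (t ^ 4 * (1 / (exp t - 1)) + t ^ 3 * ∑' n : ℕ, (1 / ((n : ℝ) + 1)) ^ 2)
      ≤ C * |b| * (t ^ 3 + t ^ 3 * ∑' n : ℕ, (1 / ((n : ℝ) + 1)) ^ 2) := by gcongr
  have htri := abs_add_le _ _ |>.trans (add_le_add (hle.trans hfin) (hpoly.trans hbb))
  refine le_of_eq_of_le (congrArg abs ?_) (htri.trans (le_of_eq ?_))
  · ring
  · ring

/-! ### The rotationally symmetric mode -/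

/-- No differentiability of `I₀` is needed: the power series is termwise Lipschitz on bounded
sets, which bounds `deriv I₀`, and `I₀ ≥ 1` by its constant term. -/
lemma mode_zero_bound (I₀ : ℝ → ℝ)
    (hI₀ : ∀ z : ℝ, I₀ z = ∑' k : ℕ, z ^ (2 * k) / (2 ^ (2 * k) * (Nat.factorial k) ^ 2))
    (L : ℝ) (hL : 0 ≤ L) : ∃ K, 0 ≤ K ∧
      ∀ b ∈ Set.Icc (-L) L, |b * deriv I₀ (b / 2) / I₀ (b / 2)| ≤ K * |b| := by
  have hfac : ∀ k : ℕ, (1 : ℝ) ≤ (Nat.factorial k : ℝ) := fun k => by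
    exact_mod_cast Nat.succ_le_of_lt (Nat.factorial_pos k)
  have hsum : ∀ z : ℝ, Summable fun k : ℕ =>
      z ^ (2 * k) / (2 ^ (2 * k) * (Nat.factorial k : ℝ) ^ 2) := by
    intro z
    refine Summable.of_nonneg_of_le (fun k => ?_) (fun k => ?_)
      (Real.summable_pow_div_factorial (z ^ 2))
    · rw [pow_mul]; positivity
    · rw [pow_mul z]
      have h1 := hfac k
      have h2 : (1 : ℝ) ≤ 2 ^ (2 * k) := one_le_pow₀ (by norm_num)
      gcongr
      nlinarith
  have hone : ∀ z : ℝ, 1 ≤ I₀ z := by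
    intro z
    rw [hI₀]
    have := (hsum z).le_tsum 0 (fun k _ => by rw [pow_mul]; positivity)
    simpa using this
  set r := L + 1 with hr
  have hr1 : 1 ≤ r := by linarith
  have hlip : ∀ z w : ℝ, |z| ≤ r → |w| ≤ r → |I₀ z - I₀ w| ≤ exp (r ^ 2) * |z - w| := by
    intro z w hz hw
    have hexp : HasSum (fun k : ℕ => (r ^ 2) ^ k / (Nat.factorial k : ℝ)) (exp (r ^ 2)) := by
      rw [Real.exp_eq_exp_ℝ]
      exact NormedSpace.expSeries_div_hasSum_exp (r ^ 2)
    have hd := (hsum z).hasSum.sub (hsum w).hasSum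
    rw [hI₀, hI₀, ← Real.norm_eq_abs]
    refine hd.norm_le_of_bounded (hexp.mul_right |z - w|) fun k => ?_
    have h1 := hfac k
    have h2 : (2 * k : ℝ) ≤ 2 ^ (2 * k) := by
      exact_mod_cast (Nat.lt_two_pow_self (n := 2 * k)).le
    have h2' : (0 : ℝ) < 2 ^ (2 * k) := by positivity
    have hp : |z ^ (2 * k) - w ^ (2 * k)| ≤ |z - w| * (2 * k : ℝ) * r ^ (2 * k) := by
      have := abs_pow_sub_pow_le z w (2 * k)
      push_cast at this
      refine this.trans ?_
      gcongr
      calc max |z| |w| ^ (2 * k - 1) ≤ r ^ (2 * k - 1) := by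
            gcongr; exact max_le hz hw
        _ ≤ r ^ (2 * k) := pow_le_pow_right₀ hr1 (by omega)
    rw [← sub_div, Real.norm_eq_abs, abs_div, abs_of_pos (by positivity :
      (0 : ℝ) < 2 ^ (2 * k) * (Nat.factorial k : ℝ) ^ 2), div_le_iff₀ (by positivity)]
    refine hp.trans ?_
    rw [← pow_mul]
    calc |z - w| * (2 * k : ℝ) * r ^ (2 * k)
        ≤ |z - w| * (2 ^ (2 * k) * (Nat.factorial k : ℝ)) * r ^ (2 * k) := by
          have h12 : (2 * k : ℝ) ≤ 2 ^ (2 * k) * (Nat.factorial k : ℝ) := by nlinarith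
          exact mul_le_mul_of_nonneg_right (mul_le_mul_of_nonneg_left h12 (abs_nonneg _))
            (by positivity)
      _ = _ := by field_simp
  refine ⟨exp (r ^ 2), (exp_pos _).le, fun b hb => ?_⟩
  have hbL : |b| ≤ L := abs_le.mpr hb
  have hb2 : |b / 2| ≤ L := by rw [abs_div, abs_two]; linarith [abs_nonneg b]
  have hderiv : ‖deriv I₀ (b / 2)‖ ≤ exp (r ^ 2) := by
    refine norm_deriv_le_of_lip' (exp_pos _).le ?_
    filter_upwards [Metric.ball_mem_nhds (b / 2) one_pos] with z hz
    refine hlip z _ ?_ (by linarith)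
    rw [Metric.mem_ball, Real.dist_eq] at hz
    have := abs_add_le (z - b / 2) (b / 2)
    rw [sub_add_cancel] at this
    linarith
  rw [Real.norm_eq_abs] at hderiv
  have h1 := hone (b / 2)
  rw [abs_div, abs_mul, abs_of_pos (by linarith : 0 < I₀ (b / 2))]
  refine (div_le_self (by positivity) h1).trans ?_
  rw [mul_comm]
  gcongr

lemma mode_zero_expansion (L K : ℝ) (hL : 0 ≤ L) (hK : 0 ≤ K) : ∃ C, 0 ≤ C ∧
    ∀ b l t : ℝ, |b| ≤ L → |l| ≤ K * |b| → 0 < t → t < 1 / 2 →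
      |exp (-t * l) - 1 + t * l - t ^ 2 * (l ^ 2 / 2)| ≤ C * |b| * t ^ 3 := by
  refine ⟨K ^ 3 * L ^ 2 + K ^ 4 * L ^ 3 * exp (K * L), by positivity, ?_⟩
  intro b l t hb hl ht0 ht
  have h := exp_fourth_order (-t * l)
  have hb0 := abs_nonneg b
  have habs : |-t * l| ≤ t * (K * |b|) := by
    rw [abs_mul, abs_neg, abs_of_pos ht0]; gcongr
  have hKL : t * (K * |b|) ≤ K * L := by
    calc t * (K * |b|) ≤ 1 * (K * L) := by gcongr; linarith
      _ = K * L := one_mul _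
  have h4 : |-t * l| ^ 4 * exp |-t * l| ≤ K ^ 4 * L ^ 3 * exp (K * L) * |b| * t ^ 3 := by
    calc |-t * l| ^ 4 * exp |-t * l| ≤ (t * (K * |b|)) ^ 4 * exp (K * L) := by
          gcongr; exact habs.trans hKL
      _ = t ^ 3 * t * K ^ 4 * |b| ^ 3 * |b| * exp (K * L) := by ring
      _ ≤ t ^ 3 * 1 * K ^ 4 * L ^ 3 * |b| * exp (K * L) := by gcongr; linarith
      _ = _ := by ring
  have h3 : |(-t * l) ^ 3 / 6| ≤ K ^ 3 * L ^ 2 * |b| * t ^ 3 := by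
    rw [abs_div, abs_pow, abs_of_pos (by norm_num : (0 : ℝ) < 6)]
    refine (div_le_self (by positivity) (by norm_num)).trans ?_
    calc |-t * l| ^ 3 ≤ (t * (K * |b|)) ^ 3 := by gcongr
      _ = t ^ 3 * K ^ 3 * |b| ^ 2 * |b| := by ring
      _ ≤ t ^ 3 * K ^ 3 * L ^ 2 * |b| := by gcongr
      _ = _ := by ring
  have htri := (abs_add_le _ _).trans (add_le_add (h.trans h4) h3)
  refine le_of_eq_of_le (congrArg abs ?_) (htri.trans (le_of_eq ?_)) <;> ring

/-! ### Assembly -/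

lemma coth_half {t : ℝ} (ht : 0 < t) :
    cosh (t / 2) / sinh (t / 2) = 1 + 2 * (1 / (exp t - 1)) := by
  have h1 : exp t = exp (t / 2) ^ 2 := by rw [sq, ← exp_add]; ring_nf
  have h2 : 1 < exp (t / 2) := one_lt_exp_iff.mpr (by linarith)
  have h3 : exp (t / 2) ^ 2 - 1 ≠ 0 := by nlinarith
  have h4 : exp (t / 2) - (exp (t / 2))⁻¹ ≠ 0 := by
    have := inv_lt_one_of_one_lt₀ h2
    linarith
  rw [cosh_eq, sinh_eq, exp_neg, h1]
  field_simp
  ring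

lemma tsum_zetaPoly (b : ℝ) :
    ∑' n : ℕ, zetaPoly b (1 / ((n : ℝ) + 1))
      = (-4 * b ^ 2 - 2 * b ^ 4) * (∑' n : ℕ, 1 / ((n : ℝ) + 1) ^ 3)
        + (3 * b ^ 2 + 3 * b ^ 4) * (π ^ 4 / 90)
        + (-2 * b ^ 2 - 9 * b ^ 4) * (∑' n : ℕ, 1 / ((n : ℝ) + 1) ^ 5)
        + (b ^ 2 + 57 / 4 * b ^ 4 + b ^ 6) * (π ^ 6 / 945) := by
  have S := fun (k : ℕ) (hk : 2 ≤ k) => (summable_inv_pow hk).hasSum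
  have h := (((((S 3 (by norm_num)).mul_left (-4 * b ^ 2 - 2 * b ^ 4)).add
    ((S 4 (by norm_num)).mul_left (3 * b ^ 2 + 3 * b ^ 4))).add
    ((S 5 (by norm_num)).mul_left (-2 * b ^ 2 - 9 * b ^ 4))).add
    ((S 6 (by norm_num)).mul_left (b ^ 2 + 57 / 4 * b ^ 4 + b ^ 6)))
  rw [tsum_inv_pow_four, tsum_inv_pow_six] at h
  simp only [← one_div_pow]
  exact h.tsum_eq

/-- Explicit small-`t` expansion of the relative Steklov heat trace
`Tr (e^{-tΛ(b)}) - Tr (e^{-tΛ(0)})` for the constant magnetic field on the unit disk: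
with `λ₀(b) = b I₀'(b/2)/I₀(b/2)`,
`λ_n(b) = n - b + 2b ((1/2)/(n+1)) M(3/2, n+2, b)/M(1/2, n+1, b)` for `n ≥ 1`,
`μ_n(b) = n - b + 2b (1/(2n) + (b-1)/(2n²) + (2b² - 7b + 2)/(4n³))`, and `E(b)`,
`F(b)` the explicit coefficients involving `π`, `ζ(3)`, `ζ(5)`, one has, uniformly for
`b ∈ [-L, L]` and `t ∈ (0, 1/2)`,
`|Tr(e^{-tΛ(b)}) - coth (t/2) - E(b) t - F(b) t² + (b²/2) t³ log t| ≤ C |b| t³`. -/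
theorem stmt_19 (I₀ : ℝ → ℝ)
    (hI₀ : ∀ z : ℝ, I₀ z = ∑' k : ℕ, z^(2*k) / (2^(2*k) * (Nat.factorial k)^2))
    (M : ℝ → ℝ → ℝ → ℝ)
    (hM : ∀ a c z : ℝ, M a c z =
      ∑' r : ℕ, ((ascPochhammer ℝ r).eval a / (ascPochhammer ℝ r).eval c)
        * z^r / (Nat.factorial r))
    (lam₀ : ℝ → ℝ)
    (hlam₀ : ∀ b : ℝ, lam₀ b = b * deriv I₀ (b/2) / I₀ (b/2))
    (lam μ : ℕ → ℝ → ℝ)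
    (hlam : ∀ n : ℕ, 1 ≤ n → ∀ b : ℝ, lam n b =
      (n:ℝ) - b + 2*b * ((1/2) / ((n:ℝ) + 1))
        * M (3/2) ((n:ℝ) + 2) b / M (1/2) ((n:ℝ) + 1) b)
    (hμ : ∀ n : ℕ, 1 ≤ n → ∀ b : ℝ, μ n b =
      (n:ℝ) - b + 2*b * (1/(2*(n:ℝ)) + (b - 1)/(2*(n:ℝ)^2)
        + (2*b^2 - 7*b + 2)/(4*(n:ℝ)^3)))
    (ζ3 ζ5 : ℝ)
    (hζ3 : ζ3 = ∑' n : ℕ, 1/((n:ℝ)+1)^3) (hζ5 : ζ5 = ∑' n : ℕ, 1/((n:ℝ)+1)^5)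
    (E F : ℝ → ℝ)
    (hE : ∀ b : ℝ, E b =
      (1 - Real.pi^2/3 + 7*ζ3) * b^2 - lam₀ b
        - (∑' n : ℕ, (lam (n+1) b - μ (n+1) b))
        - (∑' n : ℕ, (lam (n+1) (-b) - μ (n+1) (-b))))
    (hF : ∀ b : ℝ, F b =
      (1/3780) * ((5670 - 2520*Real.pi^2 + 126*Real.pi^4 + 4*Real.pi^6
            - 15120*ζ3 - 7560*ζ5) * b^2
          + (126*Real.pi^4 + 57*Real.pi^6 - 7560*ζ3 - 34020*ζ5) * b^4
          + 4*Real.pi^6 * b^6)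
        + (lam₀ b)^2/2
        + (1/2) * (∑' n : ℕ, ((lam (n+1) b)^2 - (μ (n+1) b)^2))
        + (1/2) * (∑' n : ℕ, ((lam (n+1) (-b))^2 - (μ (n+1) (-b))^2))) :
    ∀ L : ℝ, 0 < L → ∃ C : ℝ, 0 < C ∧
      ∀ b ∈ Set.Icc (-L) L, ∀ t ∈ Set.Ioo (0:ℝ) (1/2),
        |Real.exp (-t * lam₀ b)
            + (∑' n : ℕ, Real.exp (-t * lam (n+1) b))
            + (∑' n : ℕ, Real.exp (-t * lam (n+1) (-b)))
            - Real.cosh (t/2) / Real.sinh (t/2)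
            - E b * t - F b * t^2 + (b^2/2) * t^3 * Real.log t|
          ≤ C * |b| * t^3 := by
  intro L hL
  obtain ⟨K, hK, hratio⟩ := kummer_ratio_asymp L
  obtain ⟨K₀, hK₀, hzero⟩ := mode_zero_bound I₀ hI₀ L hL.le
  obtain ⟨C₁, hC₁, hpair⟩ := pair_trace L (2 * K) hL.le (by positivity)
  obtain ⟨C₂, hC₂, hmode⟩ := mode_zero_expansion L K₀ hL.le hK₀
  refine ⟨C₁ + C₂ + 1, by positivity, ?_⟩
  intro b hb t ⟨ht0, ht⟩
  have hbL : |b| ≤ L := abs_le.mpr hb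
  have hμ' : ∀ (n : ℕ) (c : ℝ),
      μ (n + 1) c = ((n : ℝ) + 1) + alphaPoly c (1 / ((n : ℝ) + 1)) := by
    intro n c
    have hn : (n : ℝ) + 1 ≠ 0 := by positivity
    rw [hμ _ (by omega)]
    unfold alphaPoly
    push_cast
    field_simp
    ring
  have hR : ∀ c ∈ Set.Icc (-L) L, ∀ n : ℕ,
      |lam (n + 1) c - μ (n + 1) c| ≤ 2 * K * |c| * (1 / ((n : ℝ) + 1)) ^ 4 := by
    intro c hc n
    have h := hratio c hc ((n : ℝ) + 1) (by linarith [Nat.cast_nonneg (α := ℝ) n])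
    rw [hμ _ (by omega), hlam _ (by omega), hM, hM]
    push_cast
    simp only [kummerTerm] at h
    have h' := mul_le_mul_of_nonneg_left h (abs_nonneg (2 * c))
    rw [← abs_mul] at h'
    refine le_of_eq_of_le (congrArg abs ?_) (h'.trans (le_of_eq ?_))
    · ring
    · rw [abs_mul, abs_two, one_div_pow]
      ring
  have hb' : -b ∈ Set.Icc (-L) L := ⟨by linarith [hb.2], by linarith [hb.1]⟩
  have key := hpair b hbL (fun n => lam (n + 1) b - μ (n + 1) b)
    (fun n => lam (n + 1) (-b) - μ (n + 1) (-b)) (hR b hb)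
    (fun n => by simpa only [abs_neg] using hR (-b) hb' n) t ht0 ht
  have e : ∀ (n : ℕ) (c : ℝ), ((n : ℝ) + 1) + (alphaPoly c (1 / ((n : ℝ) + 1))
      + (lam (n + 1) c - μ (n + 1) c)) = lam (n + 1) c := by
    intro n c
    rw [hμ' n c]
    ring
  have hZ3 : polylogExp 3 0 = ζ3 := by
    rw [polylogExp_at_zero, hζ3]
    simp only [one_div_pow]
  have hZ2 : polylogExp 2 0 = π ^ 2 / 6 := by
    rw [polylogExp_at_zero, tsum_inv_pow_two]
  simp only [e, ← hμ', hZ3, hZ2, tsum_zetaPoly, ← hζ3, ← hζ5] at key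
  have hm0 := hmode b (lam₀ b) t hbL (by rw [hlam₀]; exact hzero b hb) ht0 ht
  have htri := (abs_add_le _ _).trans (add_le_add key hm0)
  have hpos : 0 ≤ |b| * t ^ 3 := by positivity
  rw [hE, hF, coth_half ht0]
  refine le_of_eq_of_le (congrArg abs ?_) (htri.trans ?_)
  · ring
  · linarith
end
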